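/- Let 𝚫 ∈ Ã be a gentle quiver without branch arrows, without branch triangles, and without free relations, and let Γ be its standard model. Then Γ is a 1-cycle gentle quiver, every relation of Γ is isolated in Γ, and 𝚫 is isomorphic (as a quiver with relations) to the quiver obtained from Γ by completing all of its relations. -/

import Mathlib

/-! Common formalization infrastructure for gentle quivers (Bobinski–Buan,
    "Derived equivalence classification of gentle cluster tilted algebras"). -/

/-- A (finite) quiver with (length-two, monomial) relations.  Vertices and
arrows are natural numbers; `V` and `A` are the finite sets of vertices and
arrows, `src`/`tgt` give the start and terminus of each arrow, and `rel` is the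
set of relations, a relation `(a, b)` standing for the length-two path
`a·b` (so `src a = tgt b`). -/
structure QuivRel where
  V : Finset ℕ
  A : Finset ℕ
  src : ℕ → ℕ
  tgt : ℕ → ℕ
  rel : Finset (ℕ × ℕ)

namespace GentleQuiv

/-- Two vertices are adjacent if some arrow joins them (in either direction). -/
def Adj (Q : QuivRel) (x y : ℕ) : Prop :=
  ∃ a ∈ Q.A, (Q.src a = x ∧ Q.tgt a = y) ∨ (Q.src a = y ∧ Q.tgt a = x)

/-- A quiver is connected if any two of its vertices are joined by a walk. -/
def Connected (Q : QuivRel) : Prop :=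
  ∀ x ∈ Q.V, ∀ y ∈ Q.V, Relation.ReflTransGen (Adj Q) x y

/-- `l = [α₁, …, αₙ]` is a (nonempty) path in the quiver: consecutive arrows
compose, i.e. `s αᵢ = t αᵢ₊₁`. -/
def IsPathList (Q : QuivRel) (l : List ℕ) : Prop :=
  l ≠ [] ∧ (∀ a ∈ l, a ∈ Q.A) ∧ l.Chain' (fun a b => Q.src a = Q.tgt b)

/-- The path `l` contains a subpath (two consecutive arrows) lying in `R`. -/
def HasRelSubpath (Q : QuivRel) (l : List ℕ) : Prop :=
  ∃ a b, (a, b) ∈ Q.rel ∧ [a, b] <:+: l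

/-- Gentle quiver: connected, relations are composable pairs of arrows, at most
two arrows in/out of every vertex, the usual gentleness conditions on
relations, and a global bound forcing finite dimensionality. -/
def IsGentle (Q : QuivRel) : Prop :=
  Q.V.Nonempty ∧
  (∀ a ∈ Q.A, Q.src a ∈ Q.V ∧ Q.tgt a ∈ Q.V) ∧
  Connected Q ∧
  (∀ ρ ∈ Q.rel, ρ.1 ∈ Q.A ∧ ρ.2 ∈ Q.A ∧ Q.src ρ.1 = Q.tgt ρ.2) ∧
  (∀ x, (Q.A.filter fun a => Q.src a = x).card ≤ 2) ∧
  (∀ x, (Q.A.filter fun a => Q.tgt a = x).card ≤ 2) ∧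
  (∀ a ∈ Q.A, (Q.A.filter fun b => Q.src b = Q.tgt a ∧ (b, a) ∉ Q.rel).card ≤ 1) ∧
  (∀ a ∈ Q.A, (Q.A.filter fun c => Q.tgt c = Q.src a ∧ (a, c) ∉ Q.rel).card ≤ 1) ∧
  (∀ a ∈ Q.A, (Q.A.filter fun b => (b, a) ∈ Q.rel).card ≤ 1) ∧
  (∀ a ∈ Q.A, (Q.A.filter fun c => (a, c) ∈ Q.rel).card ≤ 1) ∧
  (∃ n : ℕ, ∀ l : List ℕ, IsPathList Q l → l.length = n → HasRelSubpath Q l)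

/-- A choice of functions `σ, τ : Δ₁ → {±1}` as in Avella-Alaminos–Geiss. -/
structure SigmaTau (Q : QuivRel) where
  σ : ℕ → ℤ
  τ : ℕ → ℤ
  σ_pm : ∀ a ∈ Q.A, σ a = 1 ∨ σ a = -1
  τ_pm : ∀ a ∈ Q.A, τ a = 1 ∨ τ a = -1
  σ_src : ∀ a ∈ Q.A, ∀ b ∈ Q.A, a ≠ b → Q.src a = Q.src b → σ a = -σ b
  τ_tgt : ∀ a ∈ Q.A, ∀ b ∈ Q.A, a ≠ b → Q.tgt a = Q.tgt b → τ a = -τ b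
  rel_iff : ∀ a ∈ Q.A, ∀ b ∈ Q.A, Q.src a = Q.tgt b → ((a, b) ∈ Q.rel ↔ σ a = τ b)

/-- A thread: either a trivial path/antipath `1_{x,ε}` at a vertex `x` with a
sign `ε`, or a sequence of arrows of positive length. -/
inductive Thread where
  | triv (x : ℕ) (ε : ℤ) : Thread
  | arrows (l : List ℕ) : Thread
deriving DecidableEq

/-- Source of a thread. -/
def Thread.source (Q : QuivRel) : Thread → ℕ
  | .triv x _ => x
  | .arrows l => Q.src l.getLast!

/-- Target of a thread. -/
def Thread.target (Q : QuivRel) : Thread → ℕ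
  | .triv x _ => x
  | .arrows l => Q.tgt l.head!

/-- `σω` (for paths and antipaths alike; `σ 1_{x,ε} = ε = σ 1'_{x,ε}`). -/
def Thread.sigma {Q : QuivRel} (st : SigmaTau Q) : Thread → ℤ
  | .triv _ ε => ε
  | .arrows l => st.σ l.getLast!

/-- `τω` when `ω` is regarded as a path (`τ 1_{x,ε} = -ε`). -/
def Thread.tauPath {Q : QuivRel} (st : SigmaTau Q) : Thread → ℤ
  | .triv _ ε => -ε
  | .arrows l => st.τ l.head!

/-- `τω` when `ω` is regarded as an antipath (`τ 1'_{x,ε} = ε`). -/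
def Thread.tauAnti {Q : QuivRel} (st : SigmaTau Q) : Thread → ℤ
  | .triv _ ε => ε
  | .arrows l => st.τ l.head!

/-- Length of a thread. -/
def Thread.len : Thread → ℕ
  | .triv _ _ => 0
  | .arrows l => l.length

/-- A path in `𝚫` of positive length (no two consecutive arrows in `R`). -/
def IsPermList (Q : QuivRel) (l : List ℕ) : Prop :=
  IsPathList Q l ∧ l.Chain' (fun a b => (a, b) ∉ Q.rel)

/-- An antipath in `𝚫` of positive length (all consecutive pairs in `R`). -/
def IsAntiList (Q : QuivRel) (l : List ℕ) : Prop :=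
  l ≠ [] ∧ (∀ a ∈ l, a ∈ Q.A) ∧ l.Chain' (fun a b => (a, b) ∈ Q.rel)

/-- A thread is a path in `𝚫` (including trivial ones). -/
def IsPathThread (Q : QuivRel) : Thread → Prop
  | .triv x ε => x ∈ Q.V ∧ (ε = 1 ∨ ε = -1)
  | .arrows l => IsPermList Q l

/-- A thread is an antipath in `𝚫` (including trivial ones). -/
def IsAntiThread (Q : QuivRel) : Thread → Prop
  | .triv x ε => x ∈ Q.V ∧ (ε = 1 ∨ ε = -1)
  | .arrows l => IsAntiList Q l

/-- `w ∈ ℳ`: `w` is a maximal path of `𝚫`. -/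
def InM (Q : QuivRel) (st : SigmaTau Q) (w : Thread) : Prop :=
  IsPathThread Q w ∧
  (¬ ∃ a ∈ Q.A, Q.src a = w.target Q ∧ st.σ a = -(w.tauPath st)) ∧
  (¬ ∃ b ∈ Q.A, Q.tgt b = w.source Q ∧ st.τ b = -(w.sigma st))

/-- `w ∈ 𝒩`: `w` is a maximal antipath of `𝚫`. -/
def InN (Q : QuivRel) (st : SigmaTau Q) (w : Thread) : Prop :=
  IsAntiThread Q w ∧
  (¬ ∃ a ∈ Q.A, Q.src a = w.target Q ∧ st.σ a = w.tauAnti st) ∧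
  (¬ ∃ b ∈ Q.A, Q.tgt b = w.source Q ∧ st.τ b = w.sigma st)

/-- The graph of the bijection `Φ = φ ∘ ψ : 𝒩 → 𝒩`:  `PhiRel Q st w w'` holds
iff `w, w' ∈ 𝒩` and the maximal path `ψ w` (with `s(ψw) = sw`, `σ(ψw) = -σw`)
satisfies `t w' = t (ψ w)` and `τ w' = -τ(ψ w)`, i.e. `w' = φ (ψ w) = Φ w`. -/
def PhiRel (Q : QuivRel) (st : SigmaTau Q) (w w' : Thread) : Prop :=
  InN Q st w ∧ InN Q st w' ∧
  ∃ m : Thread, InM Q st m ∧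
    m.source Q = w.source Q ∧ m.sigma st = -(w.sigma st) ∧
    w'.target Q = m.target Q ∧ w'.tauAnti st = -(m.tauPath st)

/-- `O` is an orbit of the `ℤ`-action on `𝒩` induced by `Φ`. -/
def NOrbit (Q : QuivRel) (st : SigmaTau Q) (O : Set Thread) : Prop :=
  ∃ w, InN Q st w ∧ O = {w' | Relation.EqvGen (PhiRel Q st) w w'}

/-- `p(𝒪) = |𝒪|` for an orbit `𝒪 ∈ 𝒩/ℤ`. -/
noncomputable def pN (O : Set Thread) : ℕ := O.ncard

/-- `q(𝒪) = Σ_{ω ∈ 𝒪} ℓ(ω)` for an orbit `𝒪 ∈ 𝒩/ℤ`. -/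
noncomputable def qN (O : Set Thread) : ℕ := ∑ᶠ w ∈ O, Thread.len w

/-- `a ∈ 𝒞`: the arrow `a` occurs in no maximal antipath. -/
def InC (Q : QuivRel) (st : SigmaTau Q) (a : ℕ) : Prop :=
  a ∈ Q.A ∧ ¬ ∃ l : List ℕ, InN Q st (.arrows l) ∧ a ∈ l

/-- The graph of the bijection `Ψ : 𝒞 → 𝒞`. -/
def PsiRel (Q : QuivRel) (st : SigmaTau Q) (a b : ℕ) : Prop :=
  InC Q st a ∧ InC Q st b ∧ Q.tgt b = Q.src a ∧ st.τ b = st.σ a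

/-- `O` is an orbit of the `ℤ`-action on `𝒞` induced by `Ψ`. -/
def COrbit (Q : QuivRel) (st : SigmaTau Q) (O : Set ℕ) : Prop :=
  ∃ a, InC Q st a ∧ O = {b | Relation.EqvGen (PsiRel Q st) a b}

/-- The Avella-Alaminos–Geiss invariant `f_𝚫 : ℕ² → ℕ`:  `f_𝚫 (p,q)` counts the
orbits `𝒪 ∈ 𝒩/ℤ ⊔ 𝒞/ℤ` with `p(𝒪) = p` and `q(𝒪) = q`. -/
noncomputable def fInv (Q : QuivRel) (st : SigmaTau Q) : ℕ × ℕ → ℕ := fun pq =>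
  {O : Set Thread | NOrbit Q st O ∧ pN O = pq.1 ∧ qN O = pq.2}.ncard +
  {O : Set ℕ | COrbit Q st O ∧ pq.1 = 0 ∧ O.ncard = pq.2}.ncard

/-- `[p, q] : ℕ² → ℕ`, the characteristic function of `{(p, q)}`. -/
def charFn (p q : ℕ) : ℕ × ℕ → ℕ := fun pq => if pq = (p, q) then 1 else 0

/-- Tree type: `|Δ₀| = |Δ₁| + 1`. -/
def TreeType (Q : QuivRel) : Prop := Q.V.card = Q.A.card + 1

/-- Removing a set of arrows (keeping all vertices); relations containing a
removed arrow are discarded. -/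
def deleteArrows (Q : QuivRel) (S : Finset ℕ) : QuivRel where
  V := Q.V
  A := Q.A \ S
  src := Q.src
  tgt := Q.tgt
  rel := Q.rel.filter fun ρ => ρ.1 ∉ S ∧ ρ.2 ∉ S

/-- Branch arrow: removing it disconnects the quiver. -/
def BranchArrow (Q : QuivRel) (a : ℕ) : Prop :=
  a ∈ Q.A ∧ ¬ Connected (deleteArrows Q {a})

/-- Cycle arrow: removing it leaves the quiver connected. -/
def CycleArrow (Q : QuivRel) (a : ℕ) : Prop :=
  a ∈ Q.A ∧ Connected (deleteArrows Q {a})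

/-- Branch relation: a relation one of whose arrows is a branch arrow. -/
def BranchRel (Q : QuivRel) (ρ : ℕ × ℕ) : Prop :=
  ρ ∈ Q.rel ∧ (BranchArrow Q ρ.1 ∨ BranchArrow Q ρ.2)

/-- A relation `ρ = (α, β)` is isolated if the antipath `(α, β)` is a maximal
antipath, i.e. `ρ ∈ 𝒩`. -/
def Isolated (Q : QuivRel) (st : SigmaTau Q) (ρ : ℕ × ℕ) : Prop :=
  ρ ∈ Q.rel ∧ InN Q st (.arrows [ρ.1, ρ.2])

/-- `Q'` is obtained from `Q` by completing the relations from `R₀`, the new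
arrow attached to `ρ ∈ R₀` being `γ ρ`. -/
structure IsCompletion (Q : QuivRel) (R0 : Finset (ℕ × ℕ)) (γ : ℕ × ℕ → ℕ)
    (Q' : QuivRel) : Prop where
  subset : R0 ⊆ Q.rel
  fresh : ∀ ρ ∈ R0, γ ρ ∉ Q.A
  inj : ∀ ρ ∈ R0, ∀ ρ' ∈ R0, γ ρ = γ ρ' → ρ = ρ'
  V_eq : Q'.V = Q.V
  A_eq : Q'.A = Q.A ∪ R0.image γ
  src_old : ∀ a ∈ Q.A, Q'.src a = Q.src a
  tgt_old : ∀ a ∈ Q.A, Q'.tgt a = Q.tgt a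
  src_new : ∀ ρ ∈ R0, Q'.src (γ ρ) = Q.tgt ρ.1
  tgt_new : ∀ ρ ∈ R0, Q'.tgt (γ ρ) = Q.src ρ.2
  rel_eq : Q'.rel = Q.rel ∪ R0.image (fun ρ => (γ ρ, ρ.1)) ∪
      R0.image (fun ρ => (ρ.2, γ ρ))

/-- A 3-cycle: three pairwise distinct arrows forming an oriented cycle. -/
def Is3Cycle (Q : QuivRel) (a0 a1 a2 : ℕ) : Prop :=
  a0 ∈ Q.A ∧ a1 ∈ Q.A ∧ a2 ∈ Q.A ∧ a0 ≠ a1 ∧ a1 ≠ a2 ∧ a0 ≠ a2 ∧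
  Q.src a0 = Q.tgt a1 ∧ Q.src a1 = Q.tgt a2 ∧ Q.src a2 = Q.tgt a0

/-- A triangle: a 3-cycle all of whose three compositions are relations. -/
def IsTriangleTriple (Q : QuivRel) (a0 a1 a2 : ℕ) : Prop :=
  Is3Cycle Q a0 a1 a2 ∧ (a0, a1) ∈ Q.rel ∧ (a1, a2) ∈ Q.rel ∧ (a2, a0) ∈ Q.rel

/-- The (unordered) set of arrows of a triangle. -/
def TriangleSet (Q : QuivRel) (O : Finset ℕ) : Prop :=
  ∃ a0 a1 a2, O = {a0, a1, a2} ∧ IsTriangleTriple Q a0 a1 a2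

/-- Branch triangle: removing any two of its arrows disconnects the quiver. -/
def BranchTriangle (Q : QuivRel) (O : Finset ℕ) : Prop :=
  TriangleSet Q O ∧ ∀ S ⊆ O, S.card = 2 → ¬ Connected (deleteArrows Q S)

/-- Free relation: a relation neither of whose arrows lies in `𝒞`. -/
def FreeRel (Q : QuivRel) (st : SigmaTau Q) (ρ : ℕ × ℕ) : Prop :=
  ρ ∈ Q.rel ∧ ¬ InC Q st ρ.1 ∧ ¬ InC Q st ρ.2

/-- The class `𝒜`: gentle quivers with `f_𝚫 = m·[0,3] + [p+m+2, p]`. -/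
def ClassA (Q : QuivRel) (st : SigmaTau Q) : Prop :=
  IsGentle Q ∧ ∃ m p : ℕ, ∀ x, fInv Q st x = m * charFn 0 3 x + charFn (p + m + 2) p x

/-- The class `Ã`: gentle quivers with
`f_𝚫 = (m₁+m₂)·[0,3] + [p+m₁, p] + [q+m₂, q]`, `p+m₁ > 0`, `q+m₂ > 0`. -/
def ClassAtilde (Q : QuivRel) (st : SigmaTau Q) : Prop :=
  IsGentle Q ∧ ∃ m1 m2 p q : ℕ, 0 < p + m1 ∧ 0 < q + m2 ∧
    ∀ x, fInv Q st x =
      (m1 + m2) * charFn 0 3 x + charFn (p + m1) p x + charFn (q + m2) q x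

/-- Isomorphism of quivers with relations. -/
def IsoQR (Q Q' : QuivRel) : Prop :=
  ∃ fV fA : ℕ → ℕ,
    Set.BijOn fV ↑Q.V ↑Q'.V ∧ Set.BijOn fA ↑Q.A ↑Q'.A ∧
    (∀ a ∈ Q.A, Q'.src (fA a) = fV (Q.src a) ∧ Q'.tgt (fA a) = fV (Q.tgt a)) ∧
    (∀ a ∈ Q.A, ∀ b ∈ Q.A, ((a, b) ∈ Q.rel ↔ (fA a, fA b) ∈ Q'.rel))

/-- The quiver has no loops. -/
def NoLoops (Q : QuivRel) : Prop := ∀ a ∈ Q.A, Q.src a ≠ Q.tgt a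

/-- The reflection at `x` is defined: every arrow starting at `x` admits a
(necessarily unique) companion arrow ending at `x` not bound by a relation. -/
def CanReflect (Q : QuivRel) (x : ℕ) : Prop :=
  x ∈ Q.V ∧ ∀ a ∈ Q.A, Q.src a = x → ∃ b ∈ Q.A, Q.tgt b = x ∧ (a, b) ∉ Q.rel

/-- `Q'` is the reflection of the gentle loop-free quiver `Q` at the vertex
`x`, following Brenner–Butler tilting. -/
def IsReflection (Q : QuivRel) (x : ℕ) (Q' : QuivRel) : Prop :=
  IsGentle Q ∧ NoLoops Q ∧ CanReflect Q x ∧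
  Q'.V = Q.V ∧ Q'.A = Q.A ∧
  (∀ a ∈ Q.A, Q.tgt a = x → Q'.src a = x ∧ Q'.tgt a = Q.src a) ∧
  (∀ a ∈ Q.A, Q.src a = x →
    ∀ b ∈ Q.A, Q.tgt b = x → (a, b) ∉ Q.rel → Q'.src a = Q.src b) ∧
  (∀ a ∈ Q.A, Q.tgt a ≠ x → Q.src a ≠ x → Q'.src a = Q.src a) ∧
  (∀ a ∈ Q.A, Q.tgt a ≠ x →
    ((∃ b ∈ Q.A, Q.tgt b = x ∧ Q.src b = Q.tgt a ∧ (b, a) ∈ Q.rel) → Q'.tgt a = x) ∧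
    ((¬ ∃ b ∈ Q.A, Q.tgt b = x ∧ Q.src b = Q.tgt a ∧ (b, a) ∈ Q.rel) →
      Q'.tgt a = Q.tgt a)) ∧
  (∀ a b : ℕ, (a, b) ∈ Q'.rel ↔
    (((a, b) ∈ Q.rel ∧ Q.tgt a ≠ x ∧ Q.src a ≠ x) ∨
     (a ∈ Q.A ∧ b ∈ Q.A ∧ Q.src a = x ∧ Q.tgt b = x ∧ (a, b) ∉ Q.rel) ∨
     (a ∈ Q.A ∧ b ∈ Q.A ∧ Q.tgt a = x ∧
       ∃ c ∈ Q.A, c ≠ a ∧ Q.tgt c = x ∧ Q.src c = Q.tgt b ∧ (c, b) ∈ Q.rel)))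

/-- The opposite quiver with relations. -/
def opQR (Q : QuivRel) : QuivRel where
  V := Q.V
  A := Q.A
  src := Q.tgt
  tgt := Q.src
  rel := Q.rel.image fun ρ => (ρ.2, ρ.1)

/-- Coreflection: the dual of reflection. -/
def IsCoreflection (Q : QuivRel) (x : ℕ) (Q' : QuivRel) : Prop :=
  IsReflection (opQR Q) x (opQR Q')

/-- One step of reflection equivalence: a reflection, a coreflection, or an
isomorphism of quivers with relations. -/
def RefStep (Q Q' : QuivRel) : Prop :=
  (∃ x, IsReflection Q x Q') ∨ (∃ x, IsCoreflection Q x Q') ∨ IsoQR Q Q'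

/-- Reflection equivalence: a finite sequence of reflections/coreflections,
up to isomorphism of quivers with relations. -/
def RefEquiv : QuivRel → QuivRel → Prop := Relation.ReflTransGen RefStep

/-- A cyclic orientation of a `1`-cycle quiver without branch arrows (i.e. a
cycle): enumerations of the vertices and arrows by `ZMod n` such that the
`i`-th arrow joins the `i`-th and `(i+1)`-st vertices. -/
structure CyclicOrientation (Q : QuivRel) (n : ℕ) where
  ev : ZMod n → ℕ
  ea : ZMod n → ℕ
  ev_mem : ∀ i, ev i ∈ Q.V
  ea_mem : ∀ i, ea i ∈ Q.A
  ev_inj : Function.Injective ev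
  ea_inj : Function.Injective ea
  ev_surj : ∀ v ∈ Q.V, ∃ i, ev i = v
  ea_surj : ∀ a ∈ Q.A, ∃ i, ea i = a
  compat : ∀ i : ZMod n,
    (Q.src (ea i) = ev i ∧ Q.tgt (ea i) = ev (i + 1)) ∨
    (Q.src (ea i) = ev (i + 1) ∧ Q.tgt (ea i) = ev i)

/-- Clockwise arrow with respect to a cyclic orientation. -/
def Clockwise (Q : QuivRel) {n : ℕ} (co : CyclicOrientation Q n) (a : ℕ) : Prop :=
  a ∈ Q.A ∧ ∃ i : ZMod n, co.ea i = a ∧ Q.src a = co.ev i ∧ Q.tgt a = co.ev (i + 1)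

/-- Anticlockwise arrow with respect to a cyclic orientation. -/
def Anticlockwise (Q : QuivRel) {n : ℕ} (co : CyclicOrientation Q n) (a : ℕ) : Prop :=
  a ∈ Q.A ∧ ∃ i : ZMod n, co.ea i = a ∧ Q.src a = co.ev (i + 1) ∧ Q.tgt a = co.ev i

end GentleQuiv

namespace GentleQuiv
/-!
A maximal antipath of positive length is a maximal run of consecutive relations, and an arrow lies
in `𝒞` exactly when it can be prolonged backwards by relations for ever, that is, when it is not
accessible for the relation `(a, b) ∈ R`. A maximal antipath is determined by the half-vertex
`(x, ε)` in which it ends, and the half-vertices that occur are those in which no arrow starts.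
Hence `|𝒩| + |Δ₁| = 2 |Δ₀|`, while the lengths of the maximal antipaths add up to `|Δ₁| - |𝒞|`.
Comparing this with the shape of `f_𝚫` in the class `Ã` shows that the orbits in `𝒞/ℤ` are exactly
the triangles of `𝚫`, and that `|Δ₁| - |Δ₀|` is their number `k`. In the absence of free relations
every relation then belongs to a triangle.

Removing one arrow from a triangle does not disconnect a quiver, so a connected quiver with `j`
disjoint triangles satisfies `|Δ₀| + j ≤ |Δ₁| + 1`. Removing all arrows of a triangle `𝒪` would
violate this for the other `k - 1` triangles, and therefore disconnects `𝚫`. As `𝒪` is not a branch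
triangle, some two of its arrows may be removed together; the third one then survives as a link
between two components of `Δ ∖ 𝒪`, and exactly one of the three arrows has both ends in the same
component. That arrow is `γ_𝒪`.

Consequently `Γ` arises by removing exactly one arrow from each triangle. It is connected with
`|Δ₁| - k = |Δ₀|` arrows, its relations are the pairs `(α, β)` for which the third arrow of the
triangle was removed, these are isolated because relations of `𝚫` are determined by either of their
arrows, and completing them restores the removed arrows.
-/

section Runs

open Relation

variable {α : Type*} {r : α → α → Prop} {l l' : List α} {a b : α}

/-- A nonempty list whose consecutive entries are `r`-related and which cannot be prolonged at
either end. For the relation `(a, b) ∈ R` on the arrows of a quiver these are the maximal antipaths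
of positive length. -/
structure IsMaximalRun (r : α → α → Prop) (l : List α) : Prop where
  ne_nil : l ≠ []
  isChain : l.IsChain r
  not_rel_head : ∀ a, ¬ r a (l.head ne_nil)
  not_getLast_rel : ∀ b, ¬ r (l.getLast ne_nil) b

theorem forall_mem_of_isChain {p : α → Prop} (hp : ∀ a b, r a b → (p a ↔ p b))
    (hl : l.IsChain r) (ha : a ∈ l) (hpa : p a) : ∀ b ∈ l, p b := by
  have hhead (hne : l ≠ []) : p (l.head hne) :=
    hl.induction (fun x => p x → p (l.head hne)) l (fun x y hxy ih hy => ih ((hp x y hxy).2 hy))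
      (fun _ => id) a ha hpa
  exact hl.induction p l (fun x y hxy => (hp x y hxy).1) hhead

theorem acc_of_rel (hr : Relator.LeftUnique r) (hab : r a b) (ha : Acc r a) : Acc r b :=
  ⟨b, fun _ hcb => hr hab hcb ▸ ha⟩

theorem not_acc_of_rel_self (haa : r a a) : ¬ Acc r a := by
  intro h
  induction h with
  | intro a _ ih => exact ih a haa haa

theorem transGen_irrefl_of_acc (ha : Acc r a) : ¬ TransGen r a a :=
  fun haa => not_acc_of_rel_self haa ha.transGen

namespace IsMaximalRun

theorem eq_head_or_exists_rel (hl : IsMaximalRun r l) (hb : b ∈ l) :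
    b = l.head hl.ne_nil ∨ ∃ a ∈ l, r a b := by
  obtain ⟨s, t, rfl⟩ := List.append_of_mem hb
  rcases s.eq_nil_or_concat with rfl | ⟨s, a, rfl⟩
  · simp
  · have hab : r a b := (List.isChain_append.1 hl.isChain).2.2 a (by simp) b (by simp)
    exact .inr ⟨a, by simp, hab⟩

theorem acc_of_mem (hl : IsMaximalRun r l) (hr : Relator.LeftUnique r) (ha : a ∈ l) : Acc r a :=
  hl.isChain.induction (Acc r) l (fun _ _ => acc_of_rel hr)
    (fun _ => ⟨_, fun b hb => absurd hb (hl.not_rel_head b)⟩) a ha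

theorem nodup (hl : IsMaximalRun r l) (hr : Relator.LeftUnique r) : l.Nodup := by
  have hpairwise : l.Pairwise (TransGen r) := (hl.isChain.imp fun _ _ => TransGen.single).pairwise
  refine hpairwise.imp_of_mem fun ha _ hab => ?_
  rintro rfl
  exact transGen_irrefl_of_acc (hl.acc_of_mem hr ha) hab

theorem head_mem_of_mem (hl : IsMaximalRun r l) (hl' : IsMaximalRun r l')
    (hr : Relator.LeftUnique r) (ha : a ∈ l) (ha' : a ∈ l') : l.head hl.ne_nil ∈ l' := by
  refine hl.isChain.induction (fun x => x ∈ l' → l.head hl.ne_nil ∈ l') l ?_ (fun _ => id) a ha ha'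
  intro x y hxy ih hy
  rcases hl'.eq_head_or_exists_rel hy with rfl | ⟨z, hz, hzy⟩
  · exact absurd hxy (hl'.not_rel_head x)
  · exact ih (hr hxy hzy ▸ hz)

theorem head_eq_of_mem (hl : IsMaximalRun r l) (hl' : IsMaximalRun r l')
    (hr : Relator.LeftUnique r) (ha : a ∈ l) (ha' : a ∈ l') :
    l.head hl.ne_nil = l'.head hl'.ne_nil := by
  rcases hl'.eq_head_or_exists_rel (hl.head_mem_of_mem hl' hr ha ha') with h | ⟨z, -, hz⟩
  · exact h
  · exact absurd hz (hl.not_rel_head z)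

end IsMaximalRun

theorem isChain_cons_unique (hr : Relator.RightUnique r) :
    ∀ {a : α} {l l' : List α}, (a :: l).IsChain r → (a :: l').IsChain r →
      (∀ b, ¬ r ((a :: l).getLast (by simp)) b) → (∀ b, ¬ r ((a :: l').getLast (by simp)) b) →
      l = l'
  | _, [], [], _, _, _, _ => rfl
  | _, [], c :: _, _, h', hlast, _ => absurd (List.isChain_cons_cons.1 h').1 (hlast c)
  | _, b :: _, [], h, _, _, hlast' => absurd (List.isChain_cons_cons.1 h).1 (hlast' b)
  | a, b :: l, c :: l', h, h', hlast, hlast' => by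
    obtain ⟨hab, h⟩ := List.isChain_cons_cons.1 h
    obtain ⟨hac, h'⟩ := List.isChain_cons_cons.1 h'
    obtain rfl := hr hab hac
    rw [isChain_cons_unique hr h h' (by simpa using hlast) (by simpa using hlast')]

theorem IsMaximalRun.eq_of_mem (hl : IsMaximalRun r l) (hl' : IsMaximalRun r l')
    (hleft : Relator.LeftUnique r) (hright : Relator.RightUnique r) (ha : a ∈ l) (ha' : a ∈ l') :
    l = l' := by
  have hhead := hl.head_eq_of_mem hl' hleft ha ha'
  obtain ⟨x, t, rfl⟩ := List.exists_cons_of_ne_nil hl.ne_nil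
  obtain ⟨y, t', rfl⟩ := List.exists_cons_of_ne_nil hl'.ne_nil
  obtain rfl : x = y := hhead
  rw [isChain_cons_unique hright hl.isChain hl'.isChain hl.not_getLast_rel hl'.not_getLast_rel]

theorem exists_isChain_cons (hr : Relator.LeftUnique r) (hfin : {b | ∃ a, r a b}.Finite)
    (ha : Acc r a) :
    ∃ l, (a :: l).IsChain r ∧ ∀ b, ¬ r ((a :: l).getLast (by simp)) b := by
  induction hn : {c | TransGen r a c}.ncard using Nat.strong_induction_on generalizing a with
  | _ n ih =>
    by_cases hab : ∃ b, r a b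
    · obtain ⟨b, hab⟩ := hab
      have hb : Acc r b := acc_of_rel hr hab ha
      have hssub : {c | TransGen r b c} ⊂ {c | TransGen r a c} :=
        ⟨fun c hc => TransGen.head hab hc, fun h => transGen_irrefl_of_acc hb (h (.single hab))⟩
      have hfin' : {c | TransGen r a c}.Finite := hfin.subset fun c hc => by
        obtain ⟨d, -, hdc⟩ := TransGen.tail'_iff.1 hc
        exact ⟨d, hdc⟩
      obtain ⟨l, hl, hlast⟩ := ih _ (hn ▸ Set.ncard_lt_ncard hssub hfin') hb rfl
      exact ⟨b :: l, List.isChain_cons_cons.2 ⟨hab, hl⟩, by simpa using hlast⟩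
    · exact ⟨[], List.isChain_singleton a, by simpa using hab⟩

theorem exists_isMaximalRun_of_acc (hr : Relator.LeftUnique r) (hfin : {b | ∃ a, r a b}.Finite)
    (ha : Acc r a) : ∃ l, IsMaximalRun r l ∧ a ∈ l := by
  suffices h : ∀ l, (a :: l).IsChain r → (∀ b, ¬ r ((a :: l).getLast (by simp)) b) →
      ∃ l', IsMaximalRun r l' ∧ a :: l ⊆ l' by
    obtain ⟨l, hl, hlast⟩ := exists_isChain_cons hr hfin ha
    obtain ⟨l', hl', hsub⟩ := h l hl hlast
    exact ⟨l', hl', hsub (by simp)⟩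
  induction ha with
  | intro a _ ih =>
    intro l hl hlast
    by_cases hba : ∃ b, r b a
    · obtain ⟨b, hba⟩ := hba
      obtain ⟨l', hl', hsub⟩ :=
        ih b hba (a :: l) (List.isChain_cons_cons.2 ⟨hba, hl⟩) (by simpa using hlast)
      exact ⟨l', hl', List.Subset.trans (List.subset_cons_self b _) hsub⟩
    · exact ⟨a :: l, ⟨by simp, hl, by simpa using hba, hlast⟩, List.Subset.refl _⟩

end Runs

section Orbits

open Relation

variable {α : Type*} {r : α → α → Prop} {s : Set α} {a b c d : α}

/-- The classes meeting `s` of the equivalence relation generated by `r`. When `r` is the graph of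
a bijection of `s`, these are the orbits of the associated `ℤ`-action. -/
def orbits (r : α → α → Prop) (s : Set α) : Set (Set α) := (fun a => {b | EqvGen r a b}) '' s

theorem eqvGen_iff_of_rel_iff {p : α → Prop} (hp : ∀ a b, r a b → (p a ↔ p b))
    (hab : EqvGen r a b) : p a ↔ p b := by
  induction hab with
  | rel a b hab => exact hp a b hab
  | refl _ => exact Iff.rfl
  | symm _ _ _ ih => exact ih.symm
  | trans _ _ _ _ _ ih ih' => exact ih.trans ih'

theorem sUnion_orbits (hrs : ∀ a b, r a b → (a ∈ s ↔ b ∈ s)) : ⋃₀ orbits r s = s := by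
  ext b
  simp only [orbits, Set.sUnion_image, Set.mem_iUnion, Set.mem_ofPred_eq, exists_prop]
  exact ⟨fun ⟨a, ha, hab⟩ => (eqvGen_iff_of_rel_iff hrs hab).1 ha, fun hb => ⟨b, hb, .refl b⟩⟩

theorem subset_of_mem_orbits (hrs : ∀ a b, r a b → (a ∈ s ↔ b ∈ s)) {O : Set α}
    (hO : O ∈ orbits r s) : O ⊆ s :=
  (Set.subset_sUnion_of_mem hO).trans (sUnion_orbits hrs).subset

theorem nonempty_of_mem_orbits {O : Set α} (hO : O ∈ orbits r s) : O.Nonempty := by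
  obtain ⟨a, -, rfl⟩ := hO
  exact ⟨a, .refl a⟩

theorem pairwiseDisjoint_orbits : (orbits r s).PairwiseDisjoint id := by
  rintro _ ⟨a, -, rfl⟩ _ ⟨b, -, rfl⟩ hne
  refine Set.disjoint_left.2 fun c hac hbc => hne ?_
  have hab : EqvGen r a b := .trans _ _ _ hac (.symm _ _ hbc)
  ext d
  exact ⟨.trans _ _ _ (.symm _ _ hab), .trans _ _ _ hab⟩

theorem finsum_mem_orbits (hs : s.Finite) (hrs : ∀ a b, r a b → (a ∈ s ↔ b ∈ s)) (f : α → ℕ) :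
    ∑ᶠ O ∈ orbits r s, ∑ᶠ a ∈ O, f a = ∑ᶠ a ∈ s, f a := by
  rw [← finsum_mem_sUnion pairwiseDisjoint_orbits (hs.image _)
    fun O hO => hs.subset (subset_of_mem_orbits hrs hO), sUnion_orbits hrs]

theorem eq_of_ncard_orbit_eq_three (hleft : Relator.LeftUnique r) (hright : Relator.RightUnique r)
    (hcard : {x | EqvGen r a x}.ncard = 3) (hab : r a b) (hbc : r b c) (hcd : r c d) :
    d = a ∧ a ≠ b ∧ b ≠ c ∧ a ≠ c := by
  have orbit_subset {t : Set α} (ha : a ∈ t) (ht : ∀ x y, r x y → (x ∈ t ↔ y ∈ t)) :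
      {x | EqvGen r a x} ⊆ t := fun x hx => (eqvGen_iff_of_rel_iff ht hx).1 ha
  have hac : a ≠ c := by
    rintro rfl
    have hclosed (x y) (hxy : r x y) : x ∈ ({a, b} : Set α) ↔ y ∈ ({a, b} : Set α) :=
      ⟨by rintro (rfl | rfl); exacts [.inr (hright hxy hab), .inl (hright hxy hbc)],
        by rintro (rfl | rfl); exacts [.inr (hleft hxy hbc), .inl (hleft hxy hab)]⟩
    have hle := Set.ncard_le_ncard (orbit_subset (by simp) hclosed) (Set.toFinite _)
    have htwo : ({a, b} : Set α).ncard ≤ 2 := (Set.ncard_insert_le _ _).trans (by simp)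
    omega
  have hne_ab : a ≠ b := by
    rintro rfl
    exact hac (hright hab hbc)
  have hne_bc : b ≠ c := by
    rintro rfl
    exact hne_ab (hleft hab hbc)
  have hb : EqvGen r a b := .rel _ _ hab
  have hc : EqvGen r a c := .trans _ _ _ hb (.rel _ _ hbc)
  have hd : EqvGen r a d := .trans _ _ _ hc (.rel _ _ hcd)
  have horbit : ({a, b, c} : Set α) = {x | EqvGen r a x} := by
    refine Set.eq_of_subset_of_ncard_le ?_ ?_ (Set.finite_of_ncard_ne_zero (by omega))
    · rintro x (rfl | rfl | rfl)
      exacts [.refl _, hb, hc]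
    · rw [hcard, Set.ncard_eq_three.2 ⟨a, b, c, hne_ab, hac, hne_bc, rfl⟩]
  refine ⟨?_, hne_ab, hne_bc, hac⟩
  rcases horbit.symm.subset hd with rfl | rfl | rfl
  · rfl
  · exact absurd (hleft hab hcd) hac
  · exact absurd (hleft hbc hcd) hne_bc

end Orbits

section Antipaths

variable {Q : QuivRel} {a b c : ℕ}

/-- The relation "`(a, b)` is a relation of `Q`" on arrows; its chains are the antipaths of positive
length. -/
abbrev RelTo (Q : QuivRel) (a b : ℕ) : Prop := (a, b) ∈ Q.rel

namespace IsGentle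

theorem src_mem (hQ : IsGentle Q) (ha : a ∈ Q.A) : Q.src a ∈ Q.V := (hQ.2.1 a ha).1

theorem tgt_mem (hQ : IsGentle Q) (ha : a ∈ Q.A) : Q.tgt a ∈ Q.V := (hQ.2.1 a ha).2

theorem connected (hQ : IsGentle Q) : Connected Q := hQ.2.2.1

theorem left_mem_of_relTo (hQ : IsGentle Q) (hab : RelTo Q a b) : a ∈ Q.A := (hQ.2.2.2.1 _ hab).1

theorem right_mem_of_relTo (hQ : IsGentle Q) (hab : RelTo Q a b) : b ∈ Q.A :=
  (hQ.2.2.2.1 _ hab).2.1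

theorem src_eq_tgt_of_relTo (hQ : IsGentle Q) (hab : RelTo Q a b) : Q.src a = Q.tgt b :=
  (hQ.2.2.2.1 _ hab).2.2

theorem leftUnique_relTo (hQ : IsGentle Q) : Relator.LeftUnique (RelTo Q) := by
  intro a b c hac hbc
  have ⟨_, _, _, _, _, _, _, _, hleft, _, _⟩ := hQ
  exact Finset.card_le_one.1 (hleft c (hQ.right_mem_of_relTo hac)) a
    (Finset.mem_filter.2 ⟨hQ.left_mem_of_relTo hac, hac⟩) b
    (Finset.mem_filter.2 ⟨hQ.left_mem_of_relTo hbc, hbc⟩)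

theorem rightUnique_relTo (hQ : IsGentle Q) : Relator.RightUnique (RelTo Q) := by
  intro a b c hab hac
  have ⟨_, _, _, _, _, _, _, _, _, hright, _⟩ := hQ
  exact Finset.card_le_one.1 (hright a (hQ.left_mem_of_relTo hab)) b
    (Finset.mem_filter.2 ⟨hQ.right_mem_of_relTo hab, hab⟩) c
    (Finset.mem_filter.2 ⟨hQ.right_mem_of_relTo hac, hac⟩)

theorem finite_relTo_range (hQ : IsGentle Q) : {b | ∃ a, RelTo Q a b}.Finite :=
  Q.A.finite_toSet.subset fun _ ⟨_, hab⟩ => hQ.right_mem_of_relTo hab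

end IsGentle

/-- The half-vertices `(x, ε)`. Each arrow starts in one and ends in another, and the trivial
antipath `1'_{x,ε}` both starts and ends in `(x, ε)`. -/
def halfVertices (Q : QuivRel) : Finset (ℕ × ℤ) := Q.V ×ˢ {1, -1}

theorem card_halfVertices (Q : QuivRel) : (halfVertices Q).card = 2 * Q.V.card := by
  rw [halfVertices, Finset.card_product, mul_comm]
  rfl

/-- The half-vertex in which an arrow starts. -/
def SigmaTau.startHalf (st : SigmaTau Q) (a : ℕ) : ℕ × ℤ := (Q.src a, st.σ a)

/-- The half-vertex in which an arrow ends. -/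
def SigmaTau.endHalf (st : SigmaTau Q) (a : ℕ) : ℕ × ℤ := (Q.tgt a, st.τ a)

/-- The half-vertex in which an antipath ends. -/
def Thread.endHalf (st : SigmaTau Q) (w : Thread) : ℕ × ℤ := (w.target Q, w.tauAnti st)

variable {st : SigmaTau Q}

theorem SigmaTau.startHalf_mem (st : SigmaTau Q) (hQ : IsGentle Q) (ha : a ∈ Q.A) :
    st.startHalf a ∈ halfVertices Q := by
  simpa [halfVertices, startHalf, hQ.src_mem ha] using st.σ_pm a ha

theorem SigmaTau.endHalf_mem (st : SigmaTau Q) (hQ : IsGentle Q) (ha : a ∈ Q.A) :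
    st.endHalf a ∈ halfVertices Q := by
  simpa [halfVertices, endHalf, hQ.tgt_mem ha] using st.τ_pm a ha

theorem SigmaTau.startHalf_injOn (st : SigmaTau Q) : Set.InjOn st.startHalf Q.A := by
  intro a ha b hb hab
  obtain ⟨hsrc, hσ⟩ := Prod.mk.inj hab
  by_contra hne
  have := st.σ_src a ha b hb hne hsrc
  have := st.σ_pm a ha
  omega

theorem SigmaTau.endHalf_injOn (st : SigmaTau Q) : Set.InjOn st.endHalf Q.A := by
  intro a ha b hb hab
  obtain ⟨htgt, hτ⟩ := Prod.mk.inj hab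
  by_contra hne
  have := st.τ_tgt a ha b hb hne htgt
  have := st.τ_pm a ha
  omega

theorem IsGentle.relTo_iff (hQ : IsGentle Q) (st : SigmaTau Q) :
    RelTo Q a b ↔ a ∈ Q.A ∧ b ∈ Q.A ∧ st.startHalf a = st.endHalf b := by
  refine ⟨fun hab => ?_, fun ⟨ha, hb, hhalf⟩ => ?_⟩
  · have ha := hQ.left_mem_of_relTo hab
    have hb := hQ.right_mem_of_relTo hab
    have hsrc := hQ.src_eq_tgt_of_relTo hab
    exact ⟨ha, hb, Prod.ext hsrc ((st.rel_iff a ha b hb hsrc).1 hab)⟩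
  · obtain ⟨hsrc, hσ⟩ := Prod.mk.inj hhalf
    exact (st.rel_iff a ha b hb hsrc).2 hσ

theorem inN_triv_iff {x : ℕ} {ε : ℤ} :
    InN Q st (.triv x ε) ↔ (x, ε) ∈ halfVertices Q ∧
      (∀ a ∈ Q.A, st.startHalf a ≠ (x, ε)) ∧ ∀ b ∈ Q.A, st.endHalf b ≠ (x, ε) := by
  simp [InN, IsAntiThread, halfVertices, SigmaTau.startHalf, SigmaTau.endHalf, Thread.target,
    Thread.tauAnti, Thread.source, Thread.sigma]

theorem IsGentle.inN_arrows_iff (hQ : IsGentle Q) {l : List ℕ} :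
    InN Q st (.arrows l) ↔ (∀ a ∈ l, a ∈ Q.A) ∧ IsMaximalRun (RelTo Q) l := by
  cases l with
  | nil => exact ⟨fun h => absurd rfl h.1.1, fun h => absurd rfl h.2.ne_nil⟩
  | cons x t =>
    have hlast : (x :: t).getLast! = (x :: t).getLast (by simp) := rfl
    have hhead_iff (hx : x ∈ Q.A) (a : ℕ) :
        RelTo Q a x ↔ a ∈ Q.A ∧ Q.src a = Q.tgt x ∧ st.σ a = st.τ x := by
      simp [hQ.relTo_iff st, SigmaTau.startHalf, SigmaTau.endHalf, hx]
    have hlast_iff (hy : (x :: t).getLast! ∈ Q.A) (b : ℕ) : RelTo Q (x :: t).getLast! b ↔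
        b ∈ Q.A ∧ Q.tgt b = Q.src (x :: t).getLast! ∧ st.τ b = st.σ (x :: t).getLast! := by
      simp only [hQ.relTo_iff st, SigmaTau.startHalf, SigmaTau.endHalf, hy, true_and,
        Prod.mk.injEq, eq_comm]
    constructor
    · rintro ⟨⟨hne, hA, hchain⟩, hstart, hend⟩
      refine ⟨hA, hne, hchain, fun a ha => hstart ⟨a, (hhead_iff (hA x (by simp)) a).1 ha⟩,
        fun b hb => hend ⟨b, (hlast_iff ?_ b).1 (hlast ▸ hb)⟩⟩
      exact hlast ▸ hA _ (List.getLast_mem _)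
    · rintro ⟨hA, hl⟩
      refine ⟨⟨hl.ne_nil, hA, hl.isChain⟩,
        fun ⟨a, ha⟩ => hl.not_rel_head a ((hhead_iff (hA x (by simp)) a).2 ha),
        fun ⟨b, hb⟩ => hl.not_getLast_rel b (hlast ▸ (hlast_iff ?_ b).2 hb)⟩
      exact hlast ▸ hA _ (List.getLast_mem _)

theorem Thread.endHalf_arrows {l : List ℕ} (hl : l ≠ []) :
    (Thread.arrows l).endHalf st = st.endHalf (l.head hl) := by
  obtain ⟨a, t, rfl⟩ := List.exists_cons_of_ne_nil hl
  rfl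

theorem IsGentle.exists_inN_mem_of_acc (hQ : IsGentle Q) (st : SigmaTau Q) (ha : a ∈ Q.A)
    (hacc : Acc (RelTo Q) a) : ∃ l, InN Q st (.arrows l) ∧ a ∈ l := by
  obtain ⟨l, hl, hal⟩ :=
    exists_isMaximalRun_of_acc hQ.leftUnique_relTo hQ.finite_relTo_range hacc
  have hmem_iff (b c) (hbc : RelTo Q b c) : b ∈ Q.A ↔ c ∈ Q.A :=
    iff_of_true (hQ.left_mem_of_relTo hbc) (hQ.right_mem_of_relTo hbc)
  exact ⟨l, hQ.inN_arrows_iff.2 ⟨forall_mem_of_isChain hmem_iff hl.isChain hal ha, hl⟩, hal⟩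

theorem IsGentle.inC_iff (hQ : IsGentle Q) : InC Q st a ↔ a ∈ Q.A ∧ ¬ Acc (RelTo Q) a := by
  refine and_congr_right fun ha => not_congr ⟨?_, hQ.exists_inN_mem_of_acc st ha⟩
  rintro ⟨l, hl, hal⟩
  exact (hQ.inN_arrows_iff.1 hl).2.acc_of_mem hQ.leftUnique_relTo hal

theorem InN.endHalf_mem {w : Thread} (hw : InN Q st w) (hQ : IsGentle Q) :
    w.endHalf st ∈ halfVertices Q \ Q.A.image st.startHalf := by
  have hstart : w.endHalf st ∉ Q.A.image st.startHalf := by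
    rw [Finset.mem_image]
    rintro ⟨a, ha, h⟩
    exact hw.2.1 ⟨a, ha, Prod.mk.inj h⟩
  refine Finset.mem_sdiff.2 ⟨?_, hstart⟩
  cases w with
  | triv x ε => exact (inN_triv_iff.1 hw).1
  | arrows l =>
    rw [Thread.endHalf_arrows hw.1.1]
    exact st.endHalf_mem hQ (hw.1.2.1 _ (List.head_mem _))

theorem InN.eq_of_endHalf_eq {w w' : Thread} (hw : InN Q st w) (hw' : InN Q st w')
    (hQ : IsGentle Q) (h : w.endHalf st = w'.endHalf st) : w = w' := by
  have triv_ne {x ε l} (hx : InN Q st (.triv x ε)) (hl : InN Q st (.arrows l)) :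
      (x, ε) ≠ Thread.endHalf st (.arrows l) := by
    rw [Thread.endHalf_arrows hl.1.1]
    exact ((inN_triv_iff.1 hx).2.2 _ (hl.1.2.1 _ (List.head_mem _))).symm
  match w, w' with
  | .triv x ε, .triv y δ =>
    obtain ⟨rfl, rfl⟩ := Prod.mk.inj h
    rfl
  | .triv _ _, .arrows _ => exact absurd h (triv_ne hw hw')
  | .arrows _, .triv _ _ => exact absurd h.symm (triv_ne hw' hw)
  | .arrows l, .arrows l' =>
    obtain ⟨hA, hl⟩ := hQ.inN_arrows_iff.1 hw
    obtain ⟨hA', hl'⟩ := hQ.inN_arrows_iff.1 hw'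
    rw [Thread.endHalf_arrows hl.ne_nil, Thread.endHalf_arrows hl'.ne_nil] at h
    have hhead := st.endHalf_injOn (hA _ (List.head_mem _)) (hA' _ (List.head_mem _)) h
    rw [hl.eq_of_mem hl' hQ.leftUnique_relTo hQ.rightUnique_relTo
      (List.head_mem hl.ne_nil) (hhead ▸ List.head_mem hl'.ne_nil)]

theorem IsGentle.exists_inN_endHalf_eq (hQ : IsGentle Q) {y : ℕ × ℤ}
    (hy : y ∈ halfVertices Q \ Q.A.image st.startHalf) :
    ∃ w, InN Q st w ∧ w.endHalf st = y := by
  obtain ⟨hyV, hystart⟩ := Finset.mem_sdiff.1 hy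
  by_cases hyend : ∃ b ∈ Q.A, st.endHalf b = y
  · obtain ⟨b, hb, rfl⟩ := hyend
    have hno (a) : ¬ RelTo Q a b := fun hab =>
      hystart (Finset.mem_image.2 ⟨a, ((hQ.relTo_iff st).1 hab).1, ((hQ.relTo_iff st).1 hab).2.2⟩)
    obtain ⟨l, hl, hbl⟩ := hQ.exists_inN_mem_of_acc st hb ⟨b, fun a hab => absurd hab (hno a)⟩
    have hrun := (hQ.inN_arrows_iff.1 hl).2
    rcases hrun.eq_head_or_exists_rel hbl with hhead | ⟨a, -, hab⟩
    · exact ⟨_, hl, by rw [Thread.endHalf_arrows hrun.ne_nil, ← hhead]⟩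
    · exact absurd hab (hno a)
  · refine ⟨.triv y.1 y.2, inN_triv_iff.2 ⟨hyV, fun a ha h => ?_, by simpa using hyend⟩, rfl⟩
    exact hystart (Finset.mem_image.2 ⟨a, ha, h⟩)

theorem IsGentle.bijOn_endHalf (hQ : IsGentle Q) (st : SigmaTau Q) :
    Set.BijOn (Thread.endHalf st) {w | InN Q st w}
      ↑(halfVertices Q \ Q.A.image st.startHalf) :=
  ⟨fun _ hw => InN.endHalf_mem hw hQ, fun _ hw _ hw' => InN.eq_of_endHalf_eq hw hw' hQ,
    fun _ => hQ.exists_inN_endHalf_eq⟩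

theorem IsGentle.finite_inN (hQ : IsGentle Q) (st : SigmaTau Q) : {w | InN Q st w}.Finite :=
  (hQ.bijOn_endHalf st).finite_iff_finite.2 (Finset.finite_toSet _)

theorem IsGentle.ncard_inN_add_card_arrows (hQ : IsGentle Q) (st : SigmaTau Q) :
    {w | InN Q st w}.ncard + Q.A.card = 2 * Q.V.card := by
  have hsub : Q.A.image st.startHalf ⊆ halfVertices Q :=
    Finset.image_subset_iff.2 fun a => st.startHalf_mem hQ
  rw [(hQ.bijOn_endHalf st).ncard_eq, Set.ncard_coe_finset, ← card_halfVertices,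
    ← Finset.card_image_of_injOn st.startHalf_injOn, Finset.card_sdiff_add_card_eq_card hsub]

/-- The set of arrows of a thread. -/
def Thread.arrowSet : Thread → Set ℕ
  | .triv _ _ => ∅
  | .arrows l => {a | a ∈ l}

theorem InN.ncard_arrowSet {w : Thread} (hw : InN Q st w) (hQ : IsGentle Q) :
    w.arrowSet.ncard = w.len := by
  cases w with
  | triv x ε => exact Set.ncard_empty ℕ
  | arrows l =>
    have hnodup := (hQ.inN_arrows_iff.1 hw).2.nodup hQ.leftUnique_relTo
    rw [Thread.len, ← List.toFinset_card_of_nodup hnodup, ← Set.ncard_coe_finset,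
      List.coe_toFinset, Thread.arrowSet]

theorem IsGentle.pairwiseDisjoint_arrowSet (hQ : IsGentle Q) (st : SigmaTau Q) :
    {w | InN Q st w}.PairwiseDisjoint Thread.arrowSet := by
  intro w hw w' hw' hne
  refine Set.disjoint_left.2 fun a ha ha' => hne ?_
  match w, w' with
  | .triv _ _, _ => exact absurd ha (Set.notMem_empty a)
  | _, .triv _ _ => exact absurd ha' (Set.notMem_empty a)
  | .arrows l, .arrows l' =>
    rw [(hQ.inN_arrows_iff.1 hw).2.eq_of_mem (hQ.inN_arrows_iff.1 hw').2 hQ.leftUnique_relTo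
      hQ.rightUnique_relTo ha ha']

theorem iUnion_arrowSet (st : SigmaTau Q) :
    ⋃ w ∈ {w | InN Q st w}, w.arrowSet = ↑Q.A \ {a | InC Q st a} := by
  ext a
  simp only [Set.mem_iUnion, Set.mem_sdiff, Set.mem_ofPred_eq, exists_prop]
  constructor
  · rintro ⟨w | l, hw, ha⟩
    · exact absurd ha (Set.notMem_empty a)
    · exact ⟨hw.1.2.1 a ha, fun haC => haC.2 ⟨l, hw, ha⟩⟩
  · rintro ⟨ha, haC⟩
    obtain ⟨l, hl, hal⟩ := not_not.1 fun h => haC ⟨ha, h⟩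
    exact ⟨.arrows l, hl, hal⟩

theorem IsGentle.finsum_len_add_ncard_inC (hQ : IsGentle Q) (st : SigmaTau Q) :
    ∑ᶠ w ∈ {w | InN Q st w}, w.len + {a | InC Q st a}.ncard = Q.A.card := by
  have hfin : ∀ w ∈ {w | InN Q st w}, w.arrowSet.Finite
    | .triv _ _, _ => Set.finite_empty
    | .arrows l, _ => l.finite_toSet
  have hC : {a | InC Q st a} ⊆ ↑Q.A := fun a ha => ha.1
  have hlen : ∑ᶠ w ∈ {w | InN Q st w}, w.len = ∑ᶠ w ∈ {w | InN Q st w}, w.arrowSet.ncard :=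
    finsum_mem_congr rfl fun w hw => (InN.ncard_arrowSet hw hQ).symm
  rw [hlen, ← (hQ.finite_inN st).ncard_biUnion hfin (hQ.pairwiseDisjoint_arrowSet st),
    iUnion_arrowSet, Set.ncard_sdiff_add_ncard_of_subset hC, Set.ncard_coe_finset]

end Antipaths

section Counting

theorem eq_and_eq_of_add_eq_add {α : Type*} {s t s' t' : Multiset α} {p : α → Prop}
    (h : s + t = s' + t') (hs : ∀ a ∈ s, p a) (ht : ∀ a ∈ t, ¬ p a) (hs' : ∀ a ∈ s', p a)
    (ht' : ∀ a ∈ t', ¬ p a) : s = s' ∧ t = t' := by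
  classical
  have hfilter := congrArg (Multiset.filter p) h
  rw [Multiset.filter_add, Multiset.filter_add, Multiset.filter_eq_self.2 hs,
    Multiset.filter_eq_nil.2 ht, Multiset.filter_eq_self.2 hs', Multiset.filter_eq_nil.2 ht',
    add_zero, add_zero] at hfilter
  exact ⟨hfilter, add_left_cancel (hfilter ▸ h)⟩

/-- The multiset of values of `f` on a finite set. -/
noncomputable def valuesOn {α β : Type*} {s : Set α} (hs : s.Finite) (f : α → β) : Multiset β :=
  hs.toFinset.val.map f

section ValuesOn

variable {α β : Type*} {s : Set α} (hs : s.Finite) (f : α → β)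

theorem mem_valuesOn {x : β} : x ∈ valuesOn hs f ↔ ∃ a ∈ s, f a = x := by
  simp [valuesOn]

theorem count_valuesOn [DecidableEq β] (x : β) :
    (valuesOn hs f).count x = {a | a ∈ s ∧ f a = x}.ncard := by
  have hfin : {a | a ∈ s ∧ f a = x}.Finite := hs.subset fun a ha => ha.1
  rw [valuesOn, Multiset.count_map, ← Finset.filter_val, Finset.card_val,
    Set.ncard_eq_toFinset_card _ hfin]
  congr 1
  ext a
  simp [eq_comm]

theorem sum_map_valuesOn (g : β → ℕ) : ((valuesOn hs f).map g).sum = ∑ᶠ a ∈ s, g (f a) := by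
  rw [finsum_mem_eq_finite_toFinset_sum _ hs, valuesOn, Multiset.map_map]
  rfl

end ValuesOn

variable {Q : QuivRel} {st : SigmaTau Q}

theorem PhiRel.inN_iff (w w' : Thread) (h : PhiRel Q st w w') : InN Q st w ↔ InN Q st w' :=
  iff_of_true h.1 h.2.1

theorem PsiRel.inC_iff (a b : ℕ) (h : PsiRel Q st a b) : InC Q st a ↔ InC Q st b :=
  iff_of_true h.1 h.2.1

/-- The orbit set `𝒩/ℤ`. -/
abbrev phiOrbits (st : SigmaTau Q) : Set (Set Thread) := orbits (PhiRel Q st) {w | InN Q st w}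

/-- The orbit set `𝒞/ℤ`. -/
abbrev psiOrbits (st : SigmaTau Q) : Set (Set ℕ) := orbits (PsiRel Q st) {a | InC Q st a}

theorem mem_phiOrbits {O : Set Thread} : O ∈ phiOrbits st ↔ NOrbit Q st O :=
  exists_congr fun _ => and_congr_right fun _ => eq_comm

theorem mem_psiOrbits {O : Set ℕ} : O ∈ psiOrbits st ↔ COrbit Q st O :=
  exists_congr fun _ => and_congr_right fun _ => eq_comm

theorem finite_inC (st : SigmaTau Q) : {a | InC Q st a}.Finite :=
  Q.A.finite_toSet.subset fun _ ha => ha.1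

theorem finite_psiOrbits (st : SigmaTau Q) : (psiOrbits st).Finite := (finite_inC st).image _

theorem IsGentle.finite_phiOrbits (hQ : IsGentle Q) (st : SigmaTau Q) : (phiOrbits st).Finite :=
  (hQ.finite_inN st).image _

theorem IsGentle.pN_ne_zero (hQ : IsGentle Q) {O : Set Thread} (hO : O ∈ phiOrbits st) :
    pN O ≠ 0 :=
  Set.ncard_ne_zero_of_mem (nonempty_of_mem_orbits hO).some_mem
    ((hQ.finite_inN st).subset (subset_of_mem_orbits PhiRel.inN_iff hO))

theorem fInv_eq_count (hN : (phiOrbits st).Finite) (hC : (psiOrbits st).Finite) (x : ℕ × ℕ) :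
    fInv Q st x = (valuesOn hN fun O => (pN O, qN O)).count x +
      (valuesOn hC fun O => (0, O.ncard)).count x := by
  simp only [count_valuesOn, fInv, mem_phiOrbits, mem_psiOrbits, Prod.ext_iff, eq_comm (a := 0)]

theorem charFn_eq_count (p q : ℕ) (x : ℕ × ℕ) :
    charFn p q x = ({(p, q)} : Multiset (ℕ × ℕ)).count x := by
  simp [charFn, Multiset.count_singleton]

theorem ClassAtilde.exists_valuesOn_eq (hA : ClassAtilde Q st) (hN : (phiOrbits st).Finite)
    (hC : (psiOrbits st).Finite) :
    ∃ m₁ m₂ p q : ℕ,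
      valuesOn hN (fun O => (pN O, qN O)) = {(p + m₁, p)} + {(q + m₂, q)} ∧
      valuesOn hC (fun O => (0, O.ncard)) = (m₁ + m₂) • {(0, 3)} := by
  obtain ⟨hQ, m₁, m₂, p, q, hp, hq, hf⟩ := hA
  have hsum : valuesOn hN (fun O => (pN O, qN O)) + valuesOn hC (fun O => (0, O.ncard)) =
      {(p + m₁, p)} + {(q + m₂, q)} + (m₁ + m₂) • {(0, 3)} := by
    ext x
    rw [Multiset.count_add, ← fInv_eq_count, hf]
    simp only [charFn_eq_count, Multiset.count_add, Multiset.count_nsmul]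
    ring
  refine ⟨m₁, m₂, p, q, eq_and_eq_of_add_eq_add (p := fun x => x.1 ≠ 0) hsum ?_ ?_ ?_ ?_⟩
  · simp only [mem_valuesOn]
    rintro _ ⟨O, hO, rfl⟩
    exact hQ.pN_ne_zero hO
  · simp [mem_valuesOn]
  · simp only [Multiset.mem_add, Multiset.mem_singleton]
    rintro _ (rfl | rfl)
    exacts [hp.ne', hq.ne']
  · intro x hx
    simp [Multiset.mem_singleton.1 (Multiset.mem_of_mem_nsmul hx)]

theorem ClassAtilde.exists_card_eq (hA : ClassAtilde Q st) :
    ∃ m, Q.A.card = Q.V.card + m ∧ {a | InC Q st a}.ncard = 3 * m ∧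
      ∀ O ∈ psiOrbits st, O.ncard = 3 := by
  have hQ := hA.1
  obtain ⟨m₁, m₂, p, q, hNval, hCval⟩ :=
    hA.exists_valuesOn_eq (hQ.finite_phiOrbits st) (finite_psiOrbits st)
  have hcardN : {w | InN Q st w}.ncard = p + m₁ + (q + m₂) := by
    rw [← finsum_one, ← finsum_mem_orbits (hQ.finite_inN st) PhiRel.inN_iff]
    simp only [finsum_one]
    exact (sum_map_valuesOn (hQ.finite_phiOrbits st) (fun O => (pN O, qN O)) Prod.fst).symm.trans
      (by simp [hNval])
  have hlen : ∑ᶠ w ∈ {w | InN Q st w}, w.len = p + q := by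
    rw [← finsum_mem_orbits (hQ.finite_inN st) PhiRel.inN_iff]
    exact (sum_map_valuesOn (hQ.finite_phiOrbits st) (fun O => (pN O, qN O)) Prod.snd).symm.trans
      (by simp [hNval])
  have hcardC : {a | InC Q st a}.ncard = (m₁ + m₂) * 3 := by
    rw [← finsum_one, ← finsum_mem_orbits (finite_inC st) PsiRel.inC_iff]
    simp only [finsum_one]
    exact (sum_map_valuesOn (finite_psiOrbits st) (fun O => (0, O.ncard)) Prod.snd).symm.trans
      (by simp [hCval, Multiset.map_nsmul, Multiset.sum_nsmul])
  have hhalves := hQ.ncard_inN_add_card_arrows st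
  have harrows := hQ.finsum_len_add_ncard_inC st
  refine ⟨m₁ + m₂, by omega, by omega, fun O hO => ?_⟩
  have hmem := (mem_valuesOn (finite_psiOrbits st) fun O => (0, O.ncard)).2 ⟨O, hO, rfl⟩
  rw [hCval] at hmem
  exact (Prod.mk.inj (Multiset.mem_singleton.1 (Multiset.mem_of_mem_nsmul hmem))).2

end Counting

section Triangles

variable {Q : QuivRel} {st : SigmaTau Q} {a b c : ℕ} {O O' : Finset ℕ}

namespace IsTriangleTriple

theorem rotate (h : IsTriangleTriple Q a b c) : IsTriangleTriple Q b c a := by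
  obtain ⟨⟨ha, hb, hc, hab, hbc, hac, hsa, hsb, hsc⟩, rab, rbc, rca⟩ := h
  exact ⟨⟨hb, hc, ha, hbc, hac.symm, hab.symm, hsb, hsc, hsa⟩, rbc, rca, rab⟩

theorem mem (h : IsTriangleTriple Q a b c) : a ∈ Q.A := h.1.1

theorem relTo (h : IsTriangleTriple Q a b c) : RelTo Q a b := h.2.1

theorem src_eq_tgt (h : IsTriangleTriple Q a b c) : Q.src a = Q.tgt b := h.1.2.2.2.2.2.2.1

theorem ne (h : IsTriangleTriple Q a b c) : a ≠ b := h.1.2.2.2.1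

theorem triangleSet (h : IsTriangleTriple Q a b c) : TriangleSet Q {a, b, c} := ⟨a, b, c, rfl, h⟩

theorem not_acc (h : IsTriangleTriple Q a b c) : ¬ Acc (RelTo Q) a := fun hacc =>
  transGen_irrefl_of_acc hacc (.tail (.tail (.single h.relTo) h.rotate.relTo) h.rotate.rotate.relTo)

end IsTriangleTriple

namespace TriangleSet

theorem exists_isTriangleTriple (hO : TriangleSet Q O) (ha : a ∈ O) :
    ∃ b c, O = {a, b, c} ∧ IsTriangleTriple Q a b c := by
  obtain ⟨x, y, z, rfl, h⟩ := hO
  simp only [Finset.mem_insert, Finset.mem_singleton] at ha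
  rcases ha with rfl | rfl | rfl
  · exact ⟨y, z, rfl, h⟩
  · exact ⟨z, x, by grind, h.rotate⟩
  · exact ⟨x, y, by grind, h.rotate.rotate⟩

theorem subset (hO : TriangleSet Q O) : O ⊆ Q.A := fun _ ha =>
  let ⟨_, _, _, h⟩ := hO.exists_isTriangleTriple ha
  h.mem

theorem card_eq_three (hO : TriangleSet Q O) : O.card = 3 := by
  obtain ⟨a, b, c, rfl, h⟩ := hO
  exact Finset.card_eq_three.2 ⟨a, b, c, h.ne, h.rotate.rotate.ne.symm, h.rotate.ne, rfl⟩

theorem eq_of_mem (hO : TriangleSet Q O) (hO' : TriangleSet Q O') (hQ : IsGentle Q) (ha : a ∈ O)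
    (ha' : a ∈ O') : O = O' := by
  obtain ⟨b, c, rfl, h⟩ := hO.exists_isTriangleTriple ha
  obtain ⟨b', c', rfl, h'⟩ := hO'.exists_isTriangleTriple ha'
  obtain rfl := hQ.rightUnique_relTo h.relTo h'.relTo
  obtain rfl := hQ.rightUnique_relTo h.rotate.relTo h'.rotate.relTo
  rfl

end TriangleSet

open scoped Classical in
/-- The triangles of a quiver with relations, as sets of arrows. -/
noncomputable def triangles (Q : QuivRel) : Finset (Finset ℕ) :=
  Q.A.powerset.filter (TriangleSet Q)

theorem mem_triangles : O ∈ triangles Q ↔ TriangleSet Q O := by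
  simp only [triangles, Finset.mem_filter, Finset.mem_powerset]
  exact and_iff_right_of_imp TriangleSet.subset

theorem IsGentle.pairwiseDisjoint_triangles (hQ : IsGentle Q) :
    (triangles Q : Set (Finset ℕ)).PairwiseDisjoint id := fun _ hO _ hO' hne =>
  Finset.disjoint_left.2 fun _ ha ha' =>
    hne ((mem_triangles.1 hO).eq_of_mem (mem_triangles.1 hO') hQ ha ha')

theorem IsGentle.psiRel_iff (hQ : IsGentle Q) :
    PsiRel Q st a b ↔ InC Q st a ∧ InC Q st b ∧ RelTo Q a b := by
  refine and_congr_right fun ha => and_congr_right fun hb => ?_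
  rw [hQ.relTo_iff st, and_iff_right ha.1, and_iff_right hb.1, eq_comm (a := Q.tgt b),
    eq_comm (a := st.τ b)]
  exact Prod.mk_inj.symm

theorem IsGentle.exists_psiRel (hQ : IsGentle Q) (hb : InC Q st b) : ∃ a, PsiRel Q st a b := by
  obtain ⟨a, ha, hab⟩ := exists_not_acc_lt_of_not_acc (hQ.inC_iff.1 hb).2
  exact ⟨a, hQ.psiRel_iff.2 ⟨hQ.inC_iff.2 ⟨hQ.left_mem_of_relTo hab, ha⟩, hb, hab⟩⟩

theorem IsGentle.exists_isTriangleTriple_of_inC (hQ : IsGentle Q)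
    (horbits : ∀ O ∈ psiOrbits st, O.ncard = 3) (ha : InC Q st a) :
    ∃ b c, IsTriangleTriple Q a b c := by
  obtain ⟨c, hca⟩ := hQ.exists_psiRel ha
  obtain ⟨b, hbc⟩ := hQ.exists_psiRel hca.1
  obtain ⟨d, hdb⟩ := hQ.exists_psiRel hbc.1
  have rel_of_psiRel {x y} (h : PsiRel Q st x y) : RelTo Q x y := (hQ.psiRel_iff.1 h).2.2
  obtain ⟨rfl, hab, hbc', hac⟩ := eq_of_ncard_orbit_eq_three (r := PsiRel Q st)
    (fun _ _ _ h h' => hQ.leftUnique_relTo (rel_of_psiRel h) (rel_of_psiRel h'))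
    (fun _ _ _ h h' => hQ.rightUnique_relTo (rel_of_psiRel h) (rel_of_psiRel h'))
    (horbits _ ⟨d, hdb.1, rfl⟩) hdb hbc hca
  have rab := rel_of_psiRel hdb
  have rbc := rel_of_psiRel hbc
  have rca := rel_of_psiRel hca
  exact ⟨b, c, ⟨ha.1, hbc.1.1, hca.1.1, hab, hbc', hac, hQ.src_eq_tgt_of_relTo rab,
    hQ.src_eq_tgt_of_relTo rbc, hQ.src_eq_tgt_of_relTo rca⟩, rab, rbc, rca⟩

theorem IsGentle.inC_iff_exists_isTriangleTriple (hQ : IsGentle Q)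
    (horbits : ∀ O ∈ psiOrbits st, O.ncard = 3) :
    InC Q st a ↔ ∃ b c, IsTriangleTriple Q a b c :=
  ⟨hQ.exists_isTriangleTriple_of_inC horbits, fun ⟨_, _, h⟩ => hQ.inC_iff.2 ⟨h.mem, h.not_acc⟩⟩

theorem IsGentle.ncard_inC_eq (hQ : IsGentle Q) (horbits : ∀ O ∈ psiOrbits st, O.ncard = 3) :
    {a | InC Q st a}.ncard = (triangles Q).card * 3 := by
  have hC : {a | InC Q st a} = ↑((triangles Q).biUnion id) := by
    ext a
    simp only [Set.mem_ofPred_eq, hQ.inC_iff_exists_isTriangleTriple horbits, Finset.mem_coe,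
      Finset.mem_biUnion, mem_triangles, id]
    constructor
    · rintro ⟨b, c, h⟩
      exact ⟨_, h.triangleSet, by simp⟩
    · rintro ⟨O, hO, ha⟩
      obtain ⟨b, c, -, h⟩ := hO.exists_isTriangleTriple ha
      exact ⟨b, c, h⟩
  rw [hC, Set.ncard_coe_finset, Finset.card_biUnion hQ.pairwiseDisjoint_triangles]
  exact Finset.sum_const_nat fun O hO => (mem_triangles.1 hO).card_eq_three

theorem ClassAtilde.ncard_orbit_eq_three (hA : ClassAtilde Q st) :
    ∀ O ∈ psiOrbits st, O.ncard = 3 := by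
  obtain ⟨-, -, -, h⟩ := hA.exists_card_eq
  exact h

theorem ClassAtilde.card_arrows_eq (hA : ClassAtilde Q st) :
    Q.A.card = Q.V.card + (triangles Q).card := by
  obtain ⟨m, hm, hC, horbits⟩ := hA.exists_card_eq
  have := hA.1.ncard_inC_eq horbits
  omega

theorem ClassAtilde.exists_isTriangleTriple_of_relTo (hA : ClassAtilde Q st)
    (hfr : ∀ ρ, ¬ FreeRel Q st ρ) (hab : RelTo Q a b) : ∃ c, IsTriangleTriple Q a b c := by
  have hQ := hA.1
  have hC : InC Q st a ∨ InC Q st b := by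
    by_contra! h
    exact hfr (a, b) ⟨hab, h⟩
  rcases hC with ha | hb
  · obtain ⟨b', c, h⟩ := hQ.exists_isTriangleTriple_of_inC hA.ncard_orbit_eq_three ha
    obtain rfl := hQ.rightUnique_relTo hab h.relTo
    exact ⟨c, h⟩
  · obtain ⟨c, a', h⟩ := hQ.exists_isTriangleTriple_of_inC hA.ncard_orbit_eq_three hb
    obtain rfl := hQ.leftUnique_relTo hab h.rotate.rotate.relTo
    exact ⟨c, h.rotate.rotate⟩

end Triangles

section Connectivity

variable {Q Q' : QuivRel} {S T O : Finset ℕ} {a b c g x y z : ℕ}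

/-- The vertices `x` and `y` are joined by a walk in the underlying graph of `Q`. -/
abbrev Joined (Q : QuivRel) : ℕ → ℕ → Prop := Relation.ReflTransGen (Adj Q)

instance : Std.Symm (Adj Q) := ⟨fun _ _ ⟨a, ha, hxy⟩ => ⟨a, ha, hxy.symm⟩⟩

theorem Joined.symm (h : Joined Q x y) : Joined Q y x :=
  symm_of _ h

theorem joined_of_mem (ha : a ∈ Q.A) : Joined Q (Q.src a) (Q.tgt a) :=
  .single ⟨a, ha, .inl ⟨rfl, rfl⟩⟩

theorem Joined.of_forall_mem (h : Joined Q x y)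
    (hj : ∀ a ∈ Q.A, Joined Q' (Q.src a) (Q.tgt a)) : Joined Q' x y := by
  refine Relation.reflTransGen_closed (fun u v => ?_) _ _ h
  rintro ⟨a, ha, ⟨rfl, rfl⟩ | ⟨rfl, rfl⟩⟩
  · exact hj a ha
  · exact (hj a ha).symm

theorem deleteArrows_empty (Q : QuivRel) : deleteArrows Q ∅ = Q := by
  simp [deleteArrows]

theorem deleteArrows_deleteArrows (Q : QuivRel) (S T : Finset ℕ) :
    deleteArrows (deleteArrows Q S) T = deleteArrows Q (S ∪ T) := by
  simp only [deleteArrows, QuivRel.mk.injEq, true_and]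
  constructor <;> ext <;> grind

theorem mem_arrows_deleteArrows : a ∈ (deleteArrows Q S).A ↔ a ∈ Q.A ∧ a ∉ S :=
  Finset.mem_sdiff

theorem relTo_deleteArrows_iff :
    RelTo (deleteArrows Q S) a b ↔ RelTo Q a b ∧ a ∉ S ∧ b ∉ S :=
  Finset.mem_filter

theorem joined_deleteArrows_of_notMem (ha : a ∈ Q.A) (haS : a ∉ S) :
    Joined (deleteArrows Q S) (Q.src a) (Q.tgt a) :=
  joined_of_mem (Q := deleteArrows Q S) (mem_arrows_deleteArrows.2 ⟨ha, haS⟩)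

theorem Joined.deleteArrows_anti (hST : S ⊆ T) (h : Joined (deleteArrows Q T) x y) :
    Joined (deleteArrows Q S) x y :=
  h.of_forall_mem fun _ ha =>
    have ⟨haQ, haT⟩ := mem_arrows_deleteArrows.1 ha
    joined_deleteArrows_of_notMem haQ fun haS => haT (hST haS)

theorem Connected.deleteArrows_of_deleteArrows (h : Connected (deleteArrows Q S))
    (hj : ∀ a ∈ T, a ∉ S → Joined (deleteArrows Q T) (Q.src a) (Q.tgt a)) :
    Connected (deleteArrows Q T) := by
  refine fun x hx y hy => Joined.of_forall_mem (h x hx y hy) fun a ha => ?_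
  obtain ⟨haQ, haS⟩ := mem_arrows_deleteArrows.1 ha
  by_cases haT : a ∈ T
  · exact hj a haT haS
  · exact joined_deleteArrows_of_notMem haQ haT

theorem Connected.deleteArrows_of_joined (h : Connected Q)
    (hj : ∀ a ∈ T, Joined (deleteArrows Q T) (Q.src a) (Q.tgt a)) :
    Connected (deleteArrows Q T) := by
  rw [← deleteArrows_empty Q] at h
  exact h.deleteArrows_of_deleteArrows fun a ha _ => hj a ha

theorem Joined.joined_src_or_tgt_of_insert
    (h : Joined (deleteArrows Q T) (Q.src a) y) :
    Joined (deleteArrows Q (insert a T)) (Q.src a) y ∨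
      Joined (deleteArrows Q (insert a T)) (Q.tgt a) y := by
  induction h with
  | refl => exact .inl .refl
  | @tail u v _ huv ih =>
    obtain ⟨e, he, hev⟩ := huv
    obtain rfl | hea := eq_or_ne e a
    · rcases hev with ⟨-, rfl⟩ | ⟨rfl, -⟩
      · exact .inr .refl
      · exact .inl .refl
    · have huv : Joined (deleteArrows Q (insert a T)) u v :=
        .single ⟨e, by simpa [deleteArrows, hea] using he, hev⟩
      exact ih.imp (·.trans huv) (·.trans huv)

/-- The simple graph underlying a quiver, on the vertex set of the quiver. -/
def underlyingGraph (Q : QuivRel) : SimpleGraph Q.V :=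
  SimpleGraph.fromRel fun x y => Adj Q x y

theorem Connected.underlyingGraph_connected (h : Connected Q) (hne : Q.V.Nonempty)
    (hends : ∀ a ∈ Q.A, Q.src a ∈ Q.V ∧ Q.tgt a ∈ Q.V) : (underlyingGraph Q).Connected := by
  have reachable_of_joined {x y} (hxy : Joined Q x y) (hx : x ∈ Q.V) :
      ∃ hy : y ∈ Q.V, (underlyingGraph Q).Reachable ⟨x, hx⟩ ⟨y, hy⟩ := by
    induction hxy with
    | refl => exact ⟨hx, .rfl⟩
    | @tail u v _ huv ih =>
      obtain ⟨hu, hxu⟩ := ih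
      have hv : v ∈ Q.V := by
        obtain ⟨a, ha, ⟨-, rfl⟩ | ⟨rfl, -⟩⟩ := huv
        exacts [(hends a ha).2, (hends a ha).1]
      refine ⟨hv, hxu.trans ?_⟩
      obtain rfl | huv' := eq_or_ne u v
      · exact .rfl
      · exact SimpleGraph.Adj.reachable
          ((SimpleGraph.fromRel_adj _ _ _).2 ⟨by simpa using huv', .inl huv⟩)
  have := hne.to_subtype
  exact { preconnected := fun x y => (reachable_of_joined (h x x.2 y y.2) x.2).2 }

theorem ncard_edgeSet_underlyingGraph_le (Q : QuivRel) :
    (underlyingGraph Q).edgeSet.ncard ≤ Q.A.card := by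
  have hsub : Sym2.map (↑) '' (underlyingGraph Q).edgeSet ⊆
      (Q.A.image fun a => s(Q.src a, Q.tgt a) : Set (Sym2 ℕ)) := by
    rintro _ ⟨e, he, rfl⟩
    induction e with | _ x y
    rw [SimpleGraph.mem_edgeSet, underlyingGraph, SimpleGraph.fromRel_adj] at he
    obtain ⟨a, ha, hxy⟩ : Adj Q x y := he.2.elim id (symm_of _)
    simp only [Finset.coe_image, Set.mem_image, Finset.mem_coe, Sym2.map_mk, Sym2.eq_iff]
    exact ⟨a, ha, hxy⟩
  calc (underlyingGraph Q).edgeSet.ncard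
      = (Sym2.map (↑) '' (underlyingGraph Q).edgeSet : Set (Sym2 ℕ)).ncard :=
        (Set.ncard_image_of_injective _ (Sym2.map.injective Subtype.val_injective)).symm
    _ ≤ (Q.A.image fun a => s(Q.src a, Q.tgt a)).card := by
        simpa only [Set.ncard_coe_finset] using Set.ncard_le_ncard hsub (Finset.finite_toSet _)
    _ ≤ Q.A.card := Finset.card_image_le

theorem Connected.card_le_card_add_one (h : Connected Q) (hne : Q.V.Nonempty)
    (hends : ∀ a ∈ Q.A, Q.src a ∈ Q.V ∧ Q.tgt a ∈ Q.V) : Q.V.card ≤ Q.A.card + 1 := by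
  have hle := (h.underlyingGraph_connected hne hends).card_vert_le_card_edgeSet_add_one
  simp only [Nat.card_coe_set_eq, Nat.card_eq_fintype_card, Fintype.card_coe] at hle
  exact hle.trans (Nat.add_le_add_right (ncard_edgeSet_underlyingGraph_le Q) 1)

theorem IsTriangleTriple.joined_of_joined (h : IsTriangleTriple Q a b c)
    (hb : Joined Q' (Q.src b) (Q.tgt b)) (hc : Joined Q' (Q.src c) (Q.tgt c)) :
    Joined Q' (Q.src a) (Q.tgt a) := by
  rw [h.src_eq_tgt, ← h.rotate.rotate.src_eq_tgt]
  rw [← h.rotate.src_eq_tgt] at hc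
  exact hb.symm.trans hc.symm

theorem TriangleSet.joined_of_forall_ne (hO : TriangleSet Q O) (ha : a ∈ O)
    (hj : ∀ b ∈ O, b ≠ a → Joined Q' (Q.src b) (Q.tgt b)) : Joined Q' (Q.src a) (Q.tgt a) := by
  obtain ⟨b, c, rfl, h⟩ := hO.exists_isTriangleTriple ha
  exact h.joined_of_joined (hj b (by simp) h.ne.symm) (hj c (by simp) h.rotate.rotate.ne)

theorem TriangleSet.joined_deleteArrows (hO : TriangleSet Q O) (ha : a ∈ O)
    (hT : ∀ b ∈ O, b ≠ a → b ∉ T) : Joined (deleteArrows Q T) (Q.src a) (Q.tgt a) :=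
  hO.joined_of_forall_ne ha fun b hb hba =>
    joined_deleteArrows_of_notMem (hO.subset hb) (hT b hb hba)

theorem TriangleSet.deleteArrows_of_disjoint (hO : TriangleSet Q O) (hOS : Disjoint O S) :
    TriangleSet (deleteArrows Q S) O := by
  obtain ⟨a, b, c, rfl, ⟨ha, hb, hc, hne⟩, hrel⟩ := hO
  simp only [Finset.disjoint_insert_left, Finset.disjoint_singleton_left] at hOS
  obtain ⟨haS, hbS, hcS⟩ := hOS
  exact ⟨a, b, c, rfl, ⟨mem_arrows_deleteArrows.2 ⟨ha, haS⟩, mem_arrows_deleteArrows.2 ⟨hb, hbS⟩,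
    mem_arrows_deleteArrows.2 ⟨hc, hcS⟩, hne⟩, relTo_deleteArrows_iff.2 ⟨hrel.1, haS, hbS⟩,
    relTo_deleteArrows_iff.2 ⟨hrel.2.1, hbS, hcS⟩, relTo_deleteArrows_iff.2 ⟨hrel.2.2, hcS, haS⟩⟩

theorem Connected.card_add_card_triangles_le {F : Finset (Finset ℕ)} (h : Connected Q)
    (hne : Q.V.Nonempty) (hends : ∀ a ∈ Q.A, Q.src a ∈ Q.V ∧ Q.tgt a ∈ Q.V)
    (hF : ∀ O ∈ F, TriangleSet Q O) (hdisj : (F : Set (Finset ℕ)).PairwiseDisjoint id) :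
    Q.V.card + F.card ≤ Q.A.card + 1 := by
  induction F using Finset.induction_on generalizing Q with
  | empty => simpa using h.card_le_card_add_one hne hends
  | insert O F hOF ih =>
    rw [Finset.forall_mem_insert] at hF
    rw [Finset.coe_insert, Set.pairwiseDisjoint_insert_of_notMem hOF] at hdisj
    obtain ⟨a, ha⟩ : O.Nonempty := Finset.card_pos.1 (by rw [hF.1.card_eq_three]; norm_num)
    have haQ := hF.1.subset ha
    have hdel := ih (Q := deleteArrows Q {a})
      (h.deleteArrows_of_joined fun b hb => by
        obtain rfl := Finset.mem_singleton.1 hb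
        exact hF.1.joined_deleteArrows ha fun c _ hcb => by simpa using hcb)
      hne (fun b hb => hends b (mem_arrows_deleteArrows.1 hb).1)
      (fun O' hO' => (hF.2 O' hO').deleteArrows_of_disjoint <| Finset.disjoint_singleton_right.2 <|
        Finset.disjoint_left.1 (hdisj.2 O' hO') ha) hdisj.1
    have hcard : (deleteArrows Q {a}).A.card + 1 = Q.A.card :=
      Finset.card_sdiff_add_card_eq_card (Finset.singleton_subset_iff.2 haQ)
    rw [Finset.card_insert_of_notMem hOF]
    change Q.V.card + F.card ≤ _ at hdel
    omega

theorem TriangleSet.not_connected_deleteArrows (hO : TriangleSet Q O) (hQ : IsGentle Q)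
    (hcard : Q.A.card ≤ Q.V.card + (triangles Q).card) : ¬ Connected (deleteArrows Q O) := by
  intro h
  have hOmem := mem_triangles.2 hO
  have hdisj := hQ.pairwiseDisjoint_triangles
  have hle := h.card_add_card_triangles_le hQ.1
    (fun a ha => hQ.2.1 a (mem_arrows_deleteArrows.1 ha).1) (F := (triangles Q).erase O)
    (fun O' hO' => by
      have ⟨hne, hO'Q⟩ := Finset.mem_erase.1 hO'
      exact (mem_triangles.1 hO'Q).deleteArrows_of_disjoint (hdisj hO'Q hOmem hne))
    (hdisj.subset (Finset.erase_subset _ _))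
  have hA : (deleteArrows Q O).A.card + 3 = Q.A.card :=
    hO.card_eq_three ▸ Finset.card_sdiff_add_card_eq_card hO.subset
  have hF := Finset.card_erase_add_one hOmem
  change Q.V.card + _ ≤ _ at hle
  omega

end Connectivity

section DistinguishedArrows

variable {Q : QuivRel} {O : Finset ℕ} {a b c g x : ℕ}

theorem forall_not_branchArrow_deleteArrows_iff :
    (∀ a, ¬ BranchArrow (deleteArrows Q {g}) a) ↔
      ∀ a ∈ Q.A, a ≠ g → Connected (deleteArrows Q {g, a}) := by
  simp only [BranchArrow, mem_arrows_deleteArrows, deleteArrows_deleteArrows,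
    Finset.mem_singleton, not_and, not_not, and_imp, ← Finset.insert_eq]

theorem TriangleSet.forall_not_branchArrow_deleteArrows_iff (hO : TriangleSet Q O) (hg : g ∈ O)
    (hba : ∀ a, ¬ BranchArrow Q a) :
    (∀ a, ¬ BranchArrow (deleteArrows Q {g}) a) ↔
      ∀ x ∈ O, x ≠ g → Connected (deleteArrows Q (O.erase x)) := by
  rw [GentleQuiv.forall_not_branchArrow_deleteArrows_iff]
  obtain ⟨b, c, rfl, h⟩ := hO.exists_isTriangleTriple hg
  have erase_b : Finset.erase {g, b, c} b = {g, c} := by grind [h.ne, h.rotate.ne]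
  have erase_c : Finset.erase {g, b, c} c = {g, b} := by
    grind [h.rotate.ne, h.rotate.rotate.ne]
  simp only [Finset.forall_mem_insert, Finset.mem_singleton, forall_eq, ne_eq, not_true_eq_false,
    false_imp_iff, true_and, erase_b, erase_c]
  constructor
  · exact fun hconn => ⟨fun _ => hconn c h.rotate.rotate.mem h.rotate.rotate.ne,
      fun _ => hconn b h.rotate.mem h.ne.symm⟩
  · rintro ⟨hc, hb⟩ a ha hag
    obtain rfl | hab := eq_or_ne a b
    · exact hb h.rotate.rotate.ne
    obtain rfl | hac := eq_or_ne a c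
    · exact hc h.ne.symm
    have hdel : Connected (deleteArrows Q {a}) := by
      by_contra hconn
      exact hba a ⟨ha, hconn⟩
    refine hdel.deleteArrows_of_deleteArrows fun y hy hya => ?_
    obtain rfl : y = g := by simpa [Finset.mem_singleton.not.1 hya] using hy
    exact hO.joined_deleteArrows hg fun z hz hzy => by grind

theorem TriangleSet.exists_connected_of_not_branchTriangle (hO : TriangleSet Q O)
    (hbt : ¬ BranchTriangle Q O) : ∃ a ∈ O, Connected (deleteArrows Q (O.erase a)) := by
  obtain ⟨S, hSO, hS, hconn⟩ : ∃ S ⊆ O, S.card = 2 ∧ Connected (deleteArrows Q S) := by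
    by_contra! h
    exact hbt ⟨hO, h⟩
  obtain ⟨a, ha⟩ := Finset.card_eq_one.1 <| show (O \ S).card = 1 by
    rw [Finset.card_sdiff_of_subset hSO, hO.card_eq_three, hS]
  have haO : a ∈ O := (Finset.mem_sdiff.1 (ha ▸ Finset.mem_singleton_self a)).1
  refine ⟨a, haO, ?_⟩
  rwa [Finset.erase_eq, ← ha, Finset.sdiff_sdiff_eq_self hSO]

-- Walk from the source of `a` to that of `b`, avoiding `b` and `c`. The part after the last use of
-- `a` starts at `src a = tgt b` or at `tgt a = src c`, and it ends at `src b = tgt c`.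
theorem TriangleSet.exists_joined (hO : TriangleSet Q O) (hQ : IsGentle Q) (ha : a ∈ O)
    (hconn : Connected (deleteArrows Q (O.erase a))) :
    ∃ g ∈ O, g ≠ a ∧ Joined (deleteArrows Q O) (Q.src g) (Q.tgt g) := by
  obtain ⟨b, c, rfl, h⟩ := hO.exists_isTriangleTriple ha
  have hwalk := Joined.joined_src_or_tgt_of_insert (a := a) <|
    hconn _ (hQ.src_mem h.mem) _ (hQ.src_mem h.rotate.mem)
  rw [Finset.insert_erase ha] at hwalk
  rcases hwalk with hsrc | htgt
  · exact ⟨b, by simp, h.ne.symm, Joined.symm (h.src_eq_tgt ▸ hsrc)⟩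
  · refine ⟨c, by simp, h.rotate.rotate.ne, ?_⟩
    rwa [h.rotate.rotate.src_eq_tgt, ← h.rotate.src_eq_tgt]

theorem TriangleSet.connected_erase_iff (hO : TriangleSet Q O) (hg : g ∈ O)
    (hdis : ¬ Connected (deleteArrows Q O))
    (hjg : Joined (deleteArrows Q O) (Q.src g) (Q.tgt g)) (ha : a ∈ O) (hag : a ≠ g)
    (hconn : Connected (deleteArrows Q (O.erase a))) (hx : x ∈ O) :
    Connected (deleteArrows Q (O.erase x)) ↔ x ≠ g := by
  constructor
  · rintro h rfl
    refine hdis (h.deleteArrows_of_deleteArrows fun y hy hyx => ?_)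
    obtain rfl : y = x := by simpa [hy] using hyx
    exact hjg
  · intro hxg
    obtain rfl | hax := eq_or_ne a x
    · exact hconn
    refine hconn.deleteArrows_of_deleteArrows fun y hy hya => ?_
    obtain rfl : y = a := by simpa [Finset.mem_of_mem_erase hy] using hya
    refine hO.joined_of_forall_ne ha fun z hz hzy => ?_
    obtain rfl | hzg := eq_or_ne z g
    · exact hjg.deleteArrows_anti (Finset.erase_subset _ _)
    · obtain rfl : z = x := by
        obtain ⟨b, c, rfl, -⟩ := hO.exists_isTriangleTriple ha
        grind
      exact joined_deleteArrows_of_notMem (hO.subset hz) (Finset.notMem_erase _ _)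

theorem TriangleSet.existsUnique_forall_not_branchArrow (hO : TriangleSet Q O) (hQ : IsGentle Q)
    (hba : ∀ a, ¬ BranchArrow Q a) (hbt : ¬ BranchTriangle Q O)
    (hdis : ¬ Connected (deleteArrows Q O)) :
    ∃! g, g ∈ O ∧ ∀ a, ¬ BranchArrow (deleteArrows Q {g}) a := by
  obtain ⟨a, ha, hconn⟩ := hO.exists_connected_of_not_branchTriangle hbt
  obtain ⟨g, hg, hga, hjg⟩ := hO.exists_joined hQ ha hconn
  have connected_iff {x} (hx : x ∈ O) : Connected (deleteArrows Q (O.erase x)) ↔ x ≠ g :=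
    hO.connected_erase_iff hg hdis hjg ha hga.symm hconn hx
  refine ⟨g, ⟨hg, ?_⟩, ?_⟩
  · exact (hO.forall_not_branchArrow_deleteArrows_iff hg hba).2 fun x hx => (connected_iff hx).2
  · rintro g' ⟨hg', hnb⟩
    rw [hO.forall_not_branchArrow_deleteArrows_iff hg' hba] at hnb
    by_contra hne
    exact (connected_iff hg).1 (hnb g hg (Ne.symm hne)) rfl

end DistinguishedArrows

section Transversals

variable {Q : QuivRel} {S : Finset ℕ} {a b c : ℕ} {γ : ℕ × ℕ → ℕ}

/-- `S` consists of exactly one arrow of each triangle of `Q`, as does the set of the arrows `γ_𝒪`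
removed from `Q` to form its standard model. -/
structure IsTriangleTransversal (Q : QuivRel) (S : Finset ℕ) : Prop where
  exists_triangleSet : ∀ g ∈ S, ∃ O, TriangleSet Q O ∧ g ∈ O
  existsUnique : ∀ O, TriangleSet Q O → ∃! g, g ∈ O ∧ g ∈ S

theorem IsGentle.deleteArrows_of_connected (hQ : IsGentle Q)
    (hconn : Connected (deleteArrows Q S)) :
    IsGentle (deleteArrows Q S) := by
  obtain ⟨hne, hends, -, hrel, hout, hin, hfree_out, hfree_in, hleft, hright, n, hn⟩ := hQ
  have mem {a} (ha : a ∈ (deleteArrows Q S).A) := (mem_arrows_deleteArrows.1 ha).1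
  have notMem {a} (ha : a ∈ (deleteArrows Q S).A) := (mem_arrows_deleteArrows.1 ha).2
  have card_filter_le {k : ℕ} {p p' : ℕ → Prop} [DecidablePred p] [DecidablePred p']
      (hle : (Q.A.filter p).card ≤ k)
      (himp : ∀ a ∈ (deleteArrows Q S).A, p' a → p a) :
      ((deleteArrows Q S).A.filter p').card ≤ k := by
    refine (Finset.card_le_card fun a ha => ?_).trans hle
    obtain ⟨haΓ, hp⟩ := Finset.mem_filter.1 ha
    exact Finset.mem_filter.2 ⟨mem haΓ, himp a haΓ hp⟩
  refine ⟨hne, fun a ha => hends a (mem ha), hconn, fun ρ hρ => ?_,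
    fun x => card_filter_le (hout x) fun _ _ => id,
    fun x => card_filter_le (hin x) fun _ _ => id,
    fun a ha => card_filter_le (hfree_out a (mem ha)) fun b hb => And.imp_right fun h h' =>
      h (relTo_deleteArrows_iff.2 ⟨h', notMem hb, notMem ha⟩),
    fun a ha => card_filter_le (hfree_in a (mem ha)) fun b hb => And.imp_right fun h h' =>
      h (relTo_deleteArrows_iff.2 ⟨h', notMem ha, notMem hb⟩),
    fun a ha => card_filter_le (hleft a (mem ha)) fun _ _ h => (relTo_deleteArrows_iff.1 h).1,
    fun a ha => card_filter_le (hright a (mem ha)) fun _ _ h => (relTo_deleteArrows_iff.1 h).1,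
    n, fun l hl hlen => ?_⟩
  · obtain ⟨hρQ, h1, h2⟩ := relTo_deleteArrows_iff.1 hρ
    obtain ⟨hρ1, hρ2, hcomp⟩ := hrel ρ hρQ
    exact ⟨mem_arrows_deleteArrows.2 ⟨hρ1, h1⟩, mem_arrows_deleteArrows.2 ⟨hρ2, h2⟩, hcomp⟩
  · obtain ⟨hl_ne, hl_mem, hl_chain⟩ := hl
    obtain ⟨a, b, hab, hsub⟩ := hn l ⟨hl_ne, fun a ha => mem (hl_mem a ha), hl_chain⟩ hlen
    have notMem_of_mem {x} (hx : x ∈ [a, b]) : x ∉ S := notMem (hl_mem x (hsub.subset hx))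
    exact ⟨a, b, relTo_deleteArrows_iff.2
      ⟨hab, notMem_of_mem (by simp), notMem_of_mem (by simp)⟩, hsub⟩

namespace IsTriangleTransversal

theorem subset (hS : IsTriangleTransversal Q S) : S ⊆ Q.A := fun g hg =>
  let ⟨_, hO, hgO⟩ := hS.exists_triangleSet g hg
  hO.subset hgO

theorem mem_iff (hS : IsTriangleTransversal Q S) (h : IsTriangleTriple Q a b c) :
    c ∈ S ↔ a ∉ S ∧ b ∉ S := by
  obtain ⟨g, ⟨hg, hgS⟩, hunique⟩ := hS.existsUnique _ h.triangleSet
  simp only [Finset.mem_insert, Finset.mem_singleton, and_imp, forall_eq_or_imp,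
    forall_eq] at hg hunique
  grind [h.ne, h.rotate.ne, h.rotate.rotate.ne]

theorem connected_deleteArrows (hS : IsTriangleTransversal Q S) (hQ : Connected Q) :
    Connected (deleteArrows Q S) :=
  hQ.deleteArrows_of_joined fun g hg => by
    obtain ⟨O, hO, hgO⟩ := hS.exists_triangleSet g hg
    exact hO.joined_deleteArrows hgO fun b hb hbg hbS =>
      hbg ((hS.existsUnique O hO).unique ⟨hb, hbS⟩ ⟨hgO, hg⟩)

theorem card_eq (hS : IsTriangleTransversal Q S) (hQ : IsGentle Q) :
    S.card = (triangles Q).card := by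
  choose! O hO hmem using hS.exists_triangleSet
  refine Finset.card_bij (fun g _ => O g) (fun g hg => mem_triangles.2 (hO g hg))
    (fun g hg g' hg' h => ?_) fun O' hO' => ?_
  · exact (hS.existsUnique _ (hO g hg)).unique ⟨hmem g hg, hg⟩ ⟨h ▸ hmem g' hg', hg'⟩
  · have hO' := mem_triangles.1 hO'
    obtain ⟨g, ⟨hg, hgS⟩, -⟩ := hS.existsUnique O' hO'
    exact ⟨g, hgS, (hO g hgS).eq_of_mem hO' hQ (hmem g hgS) hg⟩

theorem isolated (hS : IsTriangleTransversal Q S) (hQ : IsGentle Q)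
    (hΓ : IsGentle (deleteArrows Q S)) (st : SigmaTau (deleteArrows Q S))
    (hab : RelTo (deleteArrows Q S) a b) (h : IsTriangleTriple Q a b c) :
    Isolated (deleteArrows Q S) st (a, b) := by
  obtain ⟨-, ha, hb⟩ := relTo_deleteArrows_iff.1 hab
  have hc : c ∈ S := (hS.mem_iff h).2 ⟨ha, hb⟩
  refine ⟨hab, hΓ.inN_arrows_iff.2 ⟨?_, ?_⟩⟩
  · simp [hΓ.left_mem_of_relTo hab, hΓ.right_mem_of_relTo hab]
  refine ⟨by simp, by simpa using hab, fun x hx => ?_, fun x hx => ?_⟩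
  · obtain ⟨hxa, hxS, -⟩ := relTo_deleteArrows_iff.1 hx
    exact hxS (hQ.leftUnique_relTo h.rotate.rotate.relTo hxa ▸ hc)
  · obtain ⟨hbx, -, hxS⟩ := relTo_deleteArrows_iff.1 hx
    exact hxS (hQ.rightUnique_relTo h.rotate.relTo hbx ▸ hc)

theorem completion_mem (hS : IsTriangleTransversal Q S)
    (hγ : ∀ a b, RelTo Q a b → IsTriangleTriple Q a b (γ (a, b)))
    (hab : RelTo (deleteArrows Q S) a b) : γ (a, b) ∈ S :=
  have ⟨hrel, hnotMem⟩ := relTo_deleteArrows_iff.1 hab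
  (hS.mem_iff (hγ a b hrel)).2 hnotMem

theorem relTo_and_completion_eq (hS : IsTriangleTransversal Q S) (hQ : IsGentle Q)
    (hγ : ∀ a b, RelTo Q a b → IsTriangleTriple Q a b (γ (a, b)))
    (h : IsTriangleTriple Q a b c) (hc : c ∈ S) :
    RelTo (deleteArrows Q S) a b ∧ γ (a, b) = c :=
  ⟨relTo_deleteArrows_iff.2 ⟨h.relTo, (hS.mem_iff h).1 hc⟩,
    hQ.rightUnique_relTo (hγ a b h.relTo).rotate.relTo h.rotate.relTo⟩

theorem arrows_eq_union_image (hS : IsTriangleTransversal Q S) (hQ : IsGentle Q)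
    (hγ : ∀ a b, RelTo Q a b → IsTriangleTriple Q a b (γ (a, b))) :
    Q.A = (deleteArrows Q S).A ∪ (deleteArrows Q S).rel.image γ := by
  ext a
  rw [Finset.mem_union, mem_arrows_deleteArrows, Finset.mem_image]
  constructor
  · intro ha
    by_cases haS : a ∈ S
    · obtain ⟨O, hO, haO⟩ := hS.exists_triangleSet a haS
      obtain ⟨b, c, -, h⟩ := hO.exists_isTriangleTriple haO
      exact .inr ⟨(b, c), hS.relTo_and_completion_eq hQ hγ h.rotate haS⟩
    · exact .inl ⟨ha, haS⟩
  · rintro (ha | ⟨ρ, hρ, rfl⟩)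
    · exact ha.1
    · exact hS.subset (hS.completion_mem hγ hρ)

theorem rel_eq_union_image (hS : IsTriangleTransversal Q S) (hQ : IsGentle Q)
    (hγ : ∀ a b, RelTo Q a b → IsTriangleTriple Q a b (γ (a, b))) :
    Q.rel = (deleteArrows Q S).rel ∪ (deleteArrows Q S).rel.image (fun ρ => (γ ρ, ρ.1)) ∪
      (deleteArrows Q S).rel.image fun ρ => (ρ.2, γ ρ) := by
  ext ⟨a, b⟩
  simp only [Finset.mem_union, Finset.mem_image, Prod.mk.injEq]
  constructor
  · intro hab
    have h := hγ a b hab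
    by_cases ha : a ∈ S
    · obtain ⟨hρ, hγρ⟩ := hS.relTo_and_completion_eq hQ hγ h.rotate ha
      exact .inl (.inr ⟨_, hρ, hγρ, rfl⟩)
    by_cases hb : b ∈ S
    · obtain ⟨hρ, hγρ⟩ := hS.relTo_and_completion_eq hQ hγ h.rotate.rotate hb
      exact .inr ⟨_, hρ, rfl, hγρ⟩
    · exact .inl (.inl (relTo_deleteArrows_iff.2 ⟨hab, ha, hb⟩))
  · rintro ((hab | ⟨ρ, hρ, rfl, rfl⟩) | ⟨ρ, hρ, rfl, rfl⟩)
    · exact (relTo_deleteArrows_iff.1 hab).1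
    · exact (hγ _ _ (relTo_deleteArrows_iff.1 hρ).1).rotate.rotate.relTo
    · exact (hγ _ _ (relTo_deleteArrows_iff.1 hρ).1).rotate.relTo

theorem isCompletion (hS : IsTriangleTransversal Q S) (hQ : IsGentle Q)
    (hγ : ∀ a b, RelTo Q a b → IsTriangleTriple Q a b (γ (a, b))) :
    IsCompletion (deleteArrows Q S) (deleteArrows Q S).rel γ Q := by
  have triple {ρ} (hρ : ρ ∈ (deleteArrows Q S).rel) : IsTriangleTriple Q ρ.1 ρ.2 (γ ρ) :=
    hγ _ _ (relTo_deleteArrows_iff.1 hρ).1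
  exact
    { subset := subset_rfl
      fresh := fun ρ hρ h => (mem_arrows_deleteArrows.1 h).2 (hS.completion_mem hγ hρ)
      inj := fun ρ hρ ρ' hρ' h => by
        have h' := triple hρ'
        rw [← h] at h'
        exact Prod.ext (hQ.rightUnique_relTo (triple hρ).rotate.rotate.relTo h'.rotate.rotate.relTo)
          (hQ.leftUnique_relTo (triple hρ).rotate.relTo h'.rotate.relTo)
      V_eq := rfl
      A_eq := hS.arrows_eq_union_image hQ hγ
      src_old := fun _ _ => rfl
      tgt_old := fun _ _ => rfl
      src_new := fun ρ hρ => (triple hρ).rotate.rotate.src_eq_tgt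
      tgt_new := fun ρ hρ => (triple hρ).rotate.src_eq_tgt.symm
      rel_eq := hS.rel_eq_union_image hQ hγ }

end IsTriangleTransversal

theorem IsGentle.isTriangleTransversal (hQ : IsGentle Q)
    (hcard : Q.A.card ≤ Q.V.card + (triangles Q).card) (hba : ∀ a, ¬ BranchArrow Q a)
    (hbt : ∀ O, ¬ BranchTriangle Q O)
    (hS : ∀ g, g ∈ S ↔ ∃ O, TriangleSet Q O ∧ g ∈ O ∧
      ∀ a, ¬ BranchArrow (deleteArrows Q {g}) a) :
    IsTriangleTransversal Q S where
  exists_triangleSet g hg :=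
    have ⟨O, hO, hgO, _⟩ := (hS g).1 hg
    ⟨O, hO, hgO⟩
  existsUnique O hO := by
    have hdis := hO.not_connected_deleteArrows hQ hcard
    refine (existsUnique_congr fun g => and_congr_right fun hg => ?_).1
      (hO.existsUnique_forall_not_branchArrow hQ hba (hbt O) hdis)
    exact ⟨fun h => (hS g).2 ⟨O, hO, hg, h⟩, fun h => have ⟨_, _, _, h⟩ := (hS g).1 h; h⟩

theorem IsoQR.refl (Q : QuivRel) : IsoQR Q Q :=
  ⟨id, id, Set.bijOn_id _, Set.bijOn_id _, fun _ _ => ⟨rfl, rfl⟩, fun _ _ _ _ => Iff.rfl⟩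

end Transversals

/-- Let `𝚫 ∈ Ã` have no branch arrows, no branch triangles
and no free relations, and let `Γ = 𝚫 ∖ {γ_𝒪 ∣ 𝒪 a triangle}` be its standard
model (here `S` is the set of the distinguished arrows `γ_𝒪`).  Then `Γ` is a
`1`-cycle gentle quiver, every relation of `Γ` is isolated in `Γ`, and `𝚫` is
isomorphic to the quiver obtained from `Γ` by completing all of its
relations. -/
theorem stmt17 (Q : QuivRel) (st : SigmaTau Q) (hA : ClassAtilde Q st)
    (hba : ∀ a : ℕ, ¬ BranchArrow Q a)
    (hbt : ∀ O : Finset ℕ, ¬ BranchTriangle Q O)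
    (hfr : ∀ ρ : ℕ × ℕ, ¬ FreeRel Q st ρ)
    (S : Finset ℕ)
    (hS : ∀ g : ℕ, g ∈ S ↔ ∃ O : Finset ℕ, TriangleSet Q O ∧ g ∈ O ∧
        ∀ a : ℕ, ¬ BranchArrow (deleteArrows Q {g}) a) :
    IsGentle (deleteArrows Q S) ∧
    (deleteArrows Q S).V.card = (deleteArrows Q S).A.card ∧
    (∀ stΓ : SigmaTau (deleteArrows Q S),
      ∀ ρ ∈ (deleteArrows Q S).rel, Isolated (deleteArrows Q S) stΓ ρ) ∧
    ∃ (γ : ℕ × ℕ → ℕ) (Qc : QuivRel),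
      IsCompletion (deleteArrows Q S) (deleteArrows Q S).rel γ Qc ∧
      IsoQR Qc Q := by
  have hQ := hA.1
  have hcard := hA.card_arrows_eq
  have hT : IsTriangleTransversal Q S := hQ.isTriangleTransversal hcard.le hba hbt hS
  have hΓ : IsGentle (deleteArrows Q S) :=
    hQ.deleteArrows_of_connected (hT.connected_deleteArrows hQ.connected)
  choose! γ hγ using fun ρ (hρ : ρ ∈ Q.rel) => hA.exists_isTriangleTriple_of_relTo hfr hρ
  refine ⟨hΓ, ?_, fun stΓ ρ hρ => ?_, γ, Q, hT.isCompletion hQ fun a b => hγ (a, b), .refl Q⟩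
  · have hΓ_card : (deleteArrows Q S).A.card + S.card = Q.A.card :=
      Finset.card_sdiff_add_card_eq_card hT.subset
    rw [hT.card_eq hQ, hcard] at hΓ_card
    exact (Nat.add_right_cancel hΓ_card).symm
  · exact hT.isolated hQ hΓ stΓ hρ (hγ ρ (relTo_deleteArrows_iff.1 hρ).1)

end GentleQuiv
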